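/- arXiv:1504.08265 — 2 statements merged into one kernel-verified Lean document; each statement's English description precedes it below -/
import Mathlib

section
/- For every root request r_{i*}, the sum of the radii over its tree is at most twice its own radius: Σ_{i∈Tree(i*)} ρ(i) ≤ 2·ρ(i*). -/
open Finset

/-- A replica is a pair `(v, t)` of a network node and a time. -/
abbrev Replica : Type := ℕ × ℕ

/-- A (directed) grid edge is a pair of replicas. -/
abbrev GEdge : Type := Replica × Replica

/-- Horizontal directed edge `((v,t),(v+1,t))`. -/
def isHoriz (e : GEdge) : Prop := e.2 = (e.1.1 + 1, e.1.2)

/-- Vertical arc `((v,t),(v,t+1))`. -/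
def isArc (e : GEdge) : Prop := e.2 = (e.1.1, e.1.2 + 1)

def isGridEdge (e : GEdge) : Prop := isHoriz e ∨ isArc e

/-- The quarter ball `B(r,ρ)`: replicas `(u,s)` with `u ≤ v`, `s ≤ t` and
`(v−u)+(t−s) ≤ ρ`. -/
def qball (r : Replica) (ρ : ℕ) : Set Replica :=
  {q | q.1 ≤ r.1 ∧ q.2 ≤ r.2 ∧ (r.1 - q.1) + (r.2 - q.2) ≤ ρ}

/-- Grid edges with both endpoints in the quarter ball `B(r,ρ)`. -/
def ballEdge (r : Replica) (ρ : ℕ) (e : GEdge) : Prop :=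
  isGridEdge e ∧ e.1 ∈ qball r ρ ∧ e.2 ∈ qball r ρ

/-- Two quarter balls are edge-disjoint if they share no grid edge. -/
def BallsEdgeDisjoint (r : Replica) (ρ : ℕ) (r' : Replica) (ρ' : ℕ) : Prop :=
  ∀ e : GEdge, ¬ (ballEdge r ρ e ∧ ballEdge r' ρ' e)

/-- The square `Sq(r,ρ) = [v−ρ,v] × [t−ρ,t]`. -/
def SqRect (r : Replica) (ρ : ℕ) : Set Replica :=
  {q | r.1 - ρ ≤ q.1 ∧ q.1 ≤ r.1 ∧ r.2 - ρ ≤ q.2 ∧ q.2 ≤ r.2}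

/-- Directed `L∞` distance `d∞(q,r)`: `max(v−u, t−s)` if `u ≤ v` and `s ≤ t`,
and `∞` otherwise. -/
def distInf (q r : Replica) : ℕ∞ :=
  if q.1 ≤ r.1 ∧ q.2 ≤ r.2 then ((max (r.1 - q.1) (r.2 - q.2) : ℕ) : ℕ∞) else ⊤

/-- The replicas of an edge set: `(0,0)` together with all endpoints of its edges. -/
def Repl (F : Finset GEdge) : Set Replica :=
  insert ((0, 0) : Replica) {q | ∃ e ∈ F, q = e.1 ∨ q = e.2}

/-- The arcs of the vertical path at node `u` from time `s` to time `τ`. -/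
def vertPath (u s τ : ℕ) : Finset GEdge :=
  (Finset.range (τ - s)).image (fun k => ((u, s + k), (u, s + k + 1)))

/-- The horizontal edges of the path at time `τ` from node `u` to node `w`. -/
def horizPath (τ u w : ℕ) : Finset GEdge :=
  (Finset.range (w - u)).image (fun k => ((u + k, τ), (u + k + 1, τ)))

/-- A directed path from `a` to `b` all of whose edges belong to `F`. -/
def PathIn (F : Finset GEdge) (a b : Replica) : Prop :=
  ∃ (L : ℕ) (f : ℕ → Replica), f 0 = a ∧ f L = b ∧ ∀ k < L, (f k, f (k + 1)) ∈ F

/-- An execution of Algorithm `Square` on a request sequence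
`r_1 = (v 1, t 1), …, r_N = (v N, t N)` (with `t 0 = 0` and nondecreasing times).
`sol i` is the edge set after handling request `i`; `ρ i` is the radius of
request `i`; `(u' i, s' i)` is its closest replica and `(us i, ss i)` its
serving replica.  The fields record the specification SQ1–SQ5. -/
structure SquareRun where
  N : ℕ
  v : ℕ → ℕ
  t : ℕ → ℕ
  ρ : ℕ → ℕ
  u' : ℕ → ℕ
  s' : ℕ → ℕ
  us : ℕ → ℕ
  ss : ℕ → ℕ
  sol : ℕ → Finset GEdge
  t_zero : t 0 = 0
  t_mono : ∀ i j, i ≤ j → j ≤ N → t i ≤ t j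
  sol_zero : sol 0 = ∅
  /-- SQ2: `ρ i` is a lower bound on the distance from every replica of the
  current solution (after the SQ1 additions) to `r_i`. -/
  rho_min : ∀ i, 1 ≤ i → i ≤ N →
    ∀ q ∈ Repl (sol (i - 1) ∪ vertPath 0 (t (i - 1)) (t i)),
      (ρ i : ℕ∞) ≤ distInf q (v i, t i)
  /-- SQ2: the closest replica belongs to the current solution. -/
  closest_mem : ∀ i, 1 ≤ i → i ≤ N →
    (u' i, s' i) ∈ Repl (sol (i - 1) ∪ vertPath 0 (t (i - 1)) (t i))
  /-- SQ2: the closest replica attains the radius. -/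
  closest_dist : ∀ i, 1 ≤ i → i ≤ N →
    distInf (u' i, s' i) (v i, t i) = (ρ i : ℕ∞)
  /-- SQ2: among replicas of node `u' i`, the closest replica is the latest. -/
  closest_late : ∀ i, 1 ≤ i → i ≤ N → ∀ s, s ≤ t i →
    (u' i, s) ∈ Repl (sol (i - 1) ∪ vertPath 0 (t (i - 1)) (t i)) → s ≤ s' i
  /-- SQ3: the serving replica is in the current solution and in `Sq(r_i, 5ρ i)`. -/
  serv_mem : ∀ i, 1 ≤ i → i ≤ N →
    (us i, ss i) ∈ Repl (sol (i - 1) ∪ vertPath 0 (t (i - 1)) (t i)) ∧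
      (us i, ss i) ∈ SqRect (v i, t i) (5 * ρ i)
  /-- SQ3: the serving node is leftmost. -/
  serv_min : ∀ i, 1 ≤ i → i ≤ N →
    ∀ q ∈ Repl (sol (i - 1) ∪ vertPath 0 (t (i - 1)) (t i)),
      q ∈ SqRect (v i, t i) (5 * ρ i) → us i ≤ q.1
  /-- SQ3: among those, the serving time is latest. -/
  serv_late : ∀ i, 1 ≤ i → i ≤ N →
    ∀ q ∈ Repl (sol (i - 1) ∪ vertPath 0 (t (i - 1)) (t i)),
      q ∈ SqRect (v i, t i) (5 * ρ i) → q.1 = us i → q.2 ≤ ss i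
  /-- SQ1 + SQ4 + SQ5: the edges added while handling request `i`. -/
  step : ∀ i, 1 ≤ i → i ≤ N →
    sol i = (sol (i - 1) ∪ vertPath 0 (t (i - 1)) (t i))
      ∪ vertPath (us i) (ss i) (t i) ∪ horizPath (t i) (us i) (v i)
      ∪ vertPath (us i) (t i) (t i + 4 * ρ i)

namespace SquareRun

variable (S : SquareRun)

/-- The `i`-th request replica. -/
def req (i : ℕ) : Replica := (S.v i, S.t i)

/-- The edges added in steps SQ4 and SQ5 while handling request `i`. -/
def added45 (i : ℕ) : Finset GEdge :=
  vertPath (S.us i) (S.ss i) (S.t i) ∪ horizPath (S.t i) (S.us i) (S.v i)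
    ∪ vertPath (S.us i) (S.t i) (S.t i + 4 * S.ρ i)

/-- Request `i` is covered if `v_i − u^s_i ≥ ρ(i)`. -/
def covered (i : ℕ) : Prop := S.ρ i ≤ S.v i - S.us i

def uncovered (i : ℕ) : Prop := ¬ S.covered i

/-- A feasible solution of the DMCD instance given by the requests of `S`. -/
def Feasible (F : Finset GEdge) : Prop :=
  (∀ e ∈ F, isGridEdge e) ∧
  (∀ i, 1 ≤ i → i ≤ S.N → PathIn F (0, 0) (S.req i)) ∧
  (∀ τ, τ < S.t S.N → ∃ w, ((w, τ), (w, τ + 1)) ∈ F)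

/-- `S.IsParent i j` means `parent(j) = i`:  `i` is the least index greater than
`j` such that `r_i` is uncovered and `SQball(j)`, `SQball(i)` are not
edge-disjoint. -/
def IsParent (i j : ℕ) : Prop :=
  1 ≤ j ∧ j < i ∧ i ≤ S.N ∧ S.uncovered j ∧ S.uncovered i ∧
    ¬ BallsEdgeDisjoint (S.req j) (S.ρ j) (S.req i) (S.ρ i) ∧
    ∀ k, j < k → k < i → S.uncovered k →
      BallsEdgeDisjoint (S.req j) (S.ρ j) (S.req k) (S.ρ k)

/-- A root: an uncovered request with no parent. -/
def IsRoot (i : ℕ) : Prop :=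
  1 ≤ i ∧ i ≤ S.N ∧ S.uncovered i ∧
    ∀ j, i < j → j ≤ S.N → S.uncovered j →
      BallsEdgeDisjoint (S.req i) (S.ρ i) (S.req j) (S.ρ j)

/-- `i ∈ Tree(iStar)`: one can go from `i` to `iStar` by repeatedly passing from
a child to its parent. -/
def InTree (i iStar : ℕ) : Prop :=
  Relation.ReflTransGen (fun a b => S.IsParent b a) i iStar

end SquareRun

/-! A replica at a node `u > 0` lies on the path built for some earlier request, and that path also
visits `u` at the time of its request. So if the latest replica of `u` before request `l` is older
than an earlier request `j` whose serving node is right of `u`, that replica already existed when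
`j` was served; if `u` is within `5 ρ_j` of `v_j`, it must then have been too old for the square of
`j`.

Let `i` be the parent of `j`. Then `t_i < t_j + ρ_i`, and `v_i` lies left of the serving node of
`j`, since otherwise the horizontal path of `j` would come closer than `ρ_i` to request `i`. Applied
to the closest replica of `i`, the observation gives `4 ρ_j ≤ ρ_i`. Applied to the serving replicas
of the requests between `j` and `i`, it shows that if any of them leaves replicas strictly between
`v_i` and the serving node of `j`, then some node in that range holds replicas throughout
`[t_j, t_j + 4 ρ_j]`. Such a node, or the serving node of `j`, keeps the closest replica of a later
sun `k` of `i` away from that interval: `t_j + 4 ρ_j + ρ_k ≤ t_k`. Thus the intervals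
`[t_j, t_j + 4 ρ_j)` of the suns of `i` are disjoint subsets of `[t_i - ρ_i, t_i + ρ_i)`, so the
radii of the suns add up to at most `ρ_i / 2`, and summing over the generations of the tree gives a
geometric series. -/

section WellFoundedSums

variable {α M : Type*} [AddCommMonoid M] [PartialOrder M] [IsOrderedAddMonoid M]

theorem sum_le_two_nsmul_of_reflTransGen {r : α → α → Prop} (hr : WellFounded r) {w : α → M}
    (hw : ∀ (p : α) (C : Finset α), (∀ c ∈ C, r c p) → 2 • ∑ c ∈ C, w c ≤ w p) (p : α)
    (T : Finset α) (hT : ∀ x ∈ T, Relation.ReflTransGen r x p) :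
    ∑ x ∈ T, w x ≤ 2 • w p := by
  classical
  induction p using hr.induction generalizing T with | _ p ih
  have : Nonempty α := ⟨p⟩
  have exists_child : ∀ x ∈ T.erase p, ∃ c, Relation.ReflTransGen r x c ∧ r c p := fun x hx =>
    (hT x (mem_of_mem_erase hx)).cases_tail.resolve_left (ne_of_mem_erase hx).symm
  choose! child hdesc hchild using exists_child
  have hproper : ∑ x ∈ T.erase p, w x ≤ w p := calc
    ∑ x ∈ T.erase p, w x
        = ∑ c ∈ (T.erase p).image child, ∑ x ∈ T.erase p with child x = c, w x :=
          (sum_fiberwise_of_maps_to (fun _ => mem_image_of_mem child) w).symm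
    _ ≤ ∑ c ∈ (T.erase p).image child, 2 • w c := by
          refine sum_le_sum fun c hc => ?_
          obtain ⟨y, hy, rfl⟩ := mem_image.1 hc
          refine ih _ (hchild y hy) _ fun x hx => ?_
          obtain ⟨hxT, hxy⟩ := mem_filter.1 hx
          exact hxy ▸ hdesc x hxT
    _ = 2 • ∑ c ∈ (T.erase p).image child, w c := smul_sum.symm
    _ ≤ w p := hw p _ (forall_mem_image.2 hchild)
  have hp : 0 ≤ w p := by simpa using hw p ∅
  by_cases hpT : p ∈ T
  · rw [← add_sum_erase T w hpT, two_nsmul]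
    gcongr
  · rw [erase_eq_of_notMem hpT] at hproper
    exact hproper.trans (two_nsmul (w p) ▸ le_add_of_nonneg_left hp)

end WellFoundedSums

/-- The intersection of two quarter balls is a quarter ball around the componentwise minimum of
their centres, which contains an edge iff its radius is positive and its centre is not the origin.
Truncated subtraction makes `(r.1 - r'.1) + (r.2 - r'.2)` the distance from that minimum to `r`. -/
theorem not_ballsEdgeDisjoint_iff {r r' : Replica} {ρ ρ' : ℕ} :
    ¬ BallsEdgeDisjoint r ρ r' ρ' ↔
      (0 < min r.1 r'.1 ∨ 0 < min r.2 r'.2) ∧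
        (r.1 - r'.1) + (r.2 - r'.2) < ρ ∧ (r'.1 - r.1) + (r'.2 - r.2) < ρ' := by
  obtain ⟨v, t⟩ := r
  obtain ⟨v', t'⟩ := r'
  simp only [BallsEdgeDisjoint, ballEdge, isGridEdge, isHoriz, isArc, qball, Set.mem_ofPred_eq,
    not_forall, not_not]
  constructor
  · rintro ⟨⟨⟨x, y⟩, x', y'⟩, ⟨hgrid, hx, hx'⟩, -, hy, hy'⟩
    simp only [Prod.mk.injEq] at hgrid hx hx' hy hy'
    omega
  · rintro ⟨hpos, hρ, hρ'⟩
    by_cases hv : 0 < min v v'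
    · refine ⟨((min v v' - 1, min t t'), (min v v', min t t')), ?_⟩
      simp only [Prod.mk.injEq, and_true]
      refine ⟨⟨Or.inl ?_, ?_, ?_⟩, Or.inl ?_, ?_, ?_⟩ <;> omega
    · refine ⟨((min v v', min t t' - 1), (min v v', min t t')), ?_⟩
      simp only [Prod.mk.injEq, true_and]
      refine ⟨⟨Or.inr ?_, ?_, ?_⟩, Or.inr ?_, ?_, ?_⟩ <;> omega

theorem repl_mono {F G : Finset GEdge} (h : F ⊆ G) : Repl F ⊆ Repl G :=
  Set.insert_subset_insert fun _ ⟨e, he, hq⟩ => ⟨e, h he, hq⟩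

theorem repl_union (F G : Finset GEdge) : Repl (F ∪ G) = Repl F ∪ Repl G := by
  ext q
  simp only [Repl, Set.mem_insert_iff, Set.mem_ofPred_eq, mem_union, Set.mem_union]
  grind

theorem zero_mem_repl (F : Finset GEdge) : (0, 0) ∈ Repl F :=
  Set.mem_insert _ _

theorem mem_repl_vertPath {u s τ a b : ℕ} :
    (a, b) ∈ Repl (vertPath u s τ) ↔ (a = 0 ∧ b = 0) ∨ (s < τ ∧ a = u ∧ s ≤ b ∧ b ≤ τ) := by
  simp only [Repl, vertPath, Set.mem_insert_iff, Set.mem_ofPred_eq, mem_image, mem_range,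
    exists_exists_and_eq_and, Prod.mk.injEq]
  refine or_congr_right ⟨fun ⟨k, hk, hab⟩ => by omega, fun hab => ?_⟩
  by_cases hb : b < τ
  · exact ⟨b - s, by omega, by omega⟩
  · exact ⟨b - s - 1, by omega, by omega⟩

theorem mem_repl_horizPath {τ u w a b : ℕ} :
    (a, b) ∈ Repl (horizPath τ u w) ↔ (a = 0 ∧ b = 0) ∨ (u < w ∧ b = τ ∧ u ≤ a ∧ a ≤ w) := by
  simp only [Repl, horizPath, Set.mem_insert_iff, Set.mem_ofPred_eq, mem_image, mem_range,
    exists_exists_and_eq_and, Prod.mk.injEq]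
  refine or_congr_right ⟨fun ⟨k, hk, hab⟩ => by omega, fun hab => ?_⟩
  by_cases ha : a < w
  · exact ⟨a - u, by omega, by omega⟩
  · exact ⟨a - u - 1, by omega, by omega⟩

namespace SquareRun

variable (S : SquareRun)

/-- The solution in which the closest and the serving replica of request `l` are picked, that is,
the one obtained after step SQ1 for `l`. -/
def currentSol (l : ℕ) : Finset GEdge :=
  S.sol (l - 1) ∪ vertPath 0 (S.t (l - 1)) (S.t l)

/-- The replicas on the paths of steps SQ4 and SQ5 for request `k`, including the serving replica
even when those paths have no edges. -/
def trail (k : ℕ) : Set Replica :=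
  {S.us k} ×ˢ Set.Icc (S.ss k) (S.t k + 4 * S.ρ k) ∪ Set.Icc (S.us k) (S.v k) ×ˢ {S.t k}

/-- The replicas on the trails of the requests before `l`. Away from node `0` these are exactly
the replicas of `S.currentSol l`. -/
def reached (l : ℕ) : Set Replica :=
  {q | ∃ k, 1 ≤ k ∧ k < l ∧ q ∈ S.trail k}

/-- The times up to `t l` at which node `u` is reached before request `l`. -/
def column (l u : ℕ) : Set ℕ :=
  {τ | τ ≤ S.t l ∧ (u, τ) ∈ S.reached l}

variable {S} {i j k l u s τ : ℕ}

theorem mem_trail :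
    (u, s) ∈ S.trail k ↔ (u = S.us k ∧ S.ss k ≤ s ∧ s ≤ S.t k + 4 * S.ρ k) ∨
      (S.us k ≤ u ∧ u ≤ S.v k) ∧ s = S.t k :=
  Iff.rfl

theorem us_le (h1 : 1 ≤ l) (hN : l ≤ S.N) : S.us l ≤ S.v l :=
  (S.serv_mem l h1 hN).2.2.1

theorem ss_le (h1 : 1 ≤ l) (hN : l ≤ S.N) : S.ss l ≤ S.t l :=
  (S.serv_mem l h1 hN).2.2.2.2

theorem t_le_ss_add (h1 : 1 ≤ l) (hN : l ≤ S.N) : S.t l ≤ S.ss l + 5 * S.ρ l :=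
  Nat.sub_le_iff_le_add.1 (S.serv_mem l h1 hN).2.2.2.1

theorem us_le_of_mem_trail (hq : (u, s) ∈ S.trail k) : S.us k ≤ u := by
  rw [mem_trail] at hq
  omega

theorem mk_t_mem_trail (h1 : 1 ≤ k) (hN : k ≤ S.N) (hq : (u, s) ∈ S.trail k) :
    (u, S.t k) ∈ S.trail k := by
  have := ss_le h1 hN
  rw [mem_trail] at hq ⊢
  omega

theorem mem_trail_of_le (h1 : 1 ≤ k) (hN : k ≤ S.N) (hq : (u, s) ∈ S.trail k)
    (hkτ : S.t k ≤ τ) (hτs : τ ≤ s) : (u, τ) ∈ S.trail k := by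
  have := ss_le h1 hN
  rw [mem_trail] at hq ⊢
  omega

theorem mem_repl_sol_iff (h1 : 1 ≤ l) (hN : l ≤ S.N) :
    (u, s) ∈ Repl (S.sol l) ↔ (u, s) ∈ Repl (S.currentSol l) ∨ (u, s) ∈ S.trail l := by
  have hus := us_le h1 hN
  have hss := ss_le h1 hN
  have horigin : u = 0 ∧ s = 0 → (u, s) ∈ Repl (S.currentSol l) := by
    rintro ⟨rfl, rfl⟩
    exact zero_mem_repl _
  have hserv : u = S.us l ∧ s = S.ss l → (u, s) ∈ Repl (S.currentSol l) := by
    rintro ⟨rfl, rfl⟩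
    exact (S.serv_mem l h1 hN).1
  rw [S.step l h1 hN, ← currentSol, repl_union, repl_union, repl_union, Set.mem_union,
    Set.mem_union, Set.mem_union, mem_repl_vertPath, mem_repl_vertPath, mem_repl_horizPath,
    mem_trail]
  by_cases hcur : (u, s) ∈ Repl (S.currentSol l)
  · simp only [hcur, true_or]
  · simp only [hcur, imp_false, false_or] at horigin hserv ⊢
    omega

theorem repl_sol_subset_repl_currentSol (hkl : k < l) (hN : l ≤ S.N) :
    Repl (S.sol k) ⊆ Repl (S.currentSol l) := by
  induction l, hkl using Nat.le_induction with
  | base => exact repl_mono subset_union_left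
  | succ l hkl ih =>
    intro q hq
    have hsol : q ∈ Repl (S.sol l) :=
      (mem_repl_sol_iff (by omega) (by omega)).2 (Or.inl (ih (by omega) hq))
    exact repl_mono subset_union_left hsol

theorem reached_subset_repl_currentSol (hN : l ≤ S.N) :
    S.reached l ⊆ Repl (S.currentSol l) := fun _ ⟨_, h1, hkl, hq⟩ =>
  repl_sol_subset_repl_currentSol hkl hN ((mem_repl_sol_iff h1 (by omega)).2 (Or.inr hq))

theorem mem_reached_of_mem_repl_currentSol (h1 : 1 ≤ l) (hN : l ≤ S.N) (hu : 0 < u)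
    (hq : (u, s) ∈ Repl (S.currentSol l)) : (u, s) ∈ S.reached l := by
  induction l, h1 using Nat.le_induction with
  | base =>
    simp only [currentSol, Nat.sub_self, S.sol_zero, empty_union, mem_repl_vertPath] at hq
    omega
  | succ l h1 ih =>
    have hsol : (u, s) ∈ Repl (S.sol l) := by
      rw [currentSol, repl_union, Set.mem_union, mem_repl_vertPath] at hq
      exact hq.resolve_right (by omega)
    rcases (mem_repl_sol_iff h1 (by omega)).1 hsol with hcur | htrail
    · obtain ⟨k, hk1, hkl, hk⟩ := ih (by omega) hcur
      exact ⟨k, hk1, by omega, hk⟩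
    · exact ⟨l, h1, by omega, htrail⟩

theorem reached_mono (h : k ≤ l) : S.reached k ⊆ S.reached l :=
  fun _ ⟨m, hm1, hmk, hq⟩ => ⟨m, hm1, hmk.trans_le h, hq⟩

theorem mk_zero_t_mem_repl_currentSol (h1 : 1 ≤ l) (hN : l ≤ S.N) :
    (0, S.t l) ∈ Repl (S.currentSol l) := by
  have extend : ∀ m, m + 1 ≤ S.N → (0, S.t m) ∈ Repl (S.sol m) →
      (0, S.t (m + 1)) ∈ Repl (S.currentSol (m + 1)) := by
    intro m hm hq
    rw [currentSol, repl_union, Set.mem_union, mem_repl_vertPath, Nat.add_sub_cancel]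
    rcases (S.t_mono m (m + 1) m.le_succ hm).eq_or_lt with ht | ht
    · exact Or.inl (ht ▸ hq)
    · exact Or.inr (Or.inr ⟨ht, rfl, ht.le, le_rfl⟩)
  induction l, h1 using Nat.le_induction with
  | base =>
    refine extend 0 hN ?_
    rw [S.t_zero]
    exact zero_mem_repl _
  | succ l h1 ih => exact extend l hN ((mem_repl_sol_iff h1 (by omega)).2 (Or.inl (ih (by omega))))

theorem radius_le_of_mem_repl (h1 : 1 ≤ l) (hN : l ≤ S.N) (hq : (u, s) ∈ Repl (S.currentSol l))
    (hu : u ≤ S.v l) (hs : s ≤ S.t l) : S.ρ l ≤ max (S.v l - u) (S.t l - s) := by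
  have hdist := S.rho_min l h1 hN _ hq
  rwa [distInf, if_pos ⟨hu, hs⟩, Nat.cast_le] at hdist

theorem radius_le_of_mem_reached (h1 : 1 ≤ l) (hN : l ≤ S.N) (hq : (u, s) ∈ S.reached l)
    (hu : u ≤ S.v l) (hs : s ≤ S.t l) : S.ρ l ≤ max (S.v l - u) (S.t l - s) :=
  radius_le_of_mem_repl h1 hN (reached_subset_repl_currentSol hN hq) hu hs

theorem radius_le_v (h1 : 1 ≤ l) (hN : l ≤ S.N) : S.ρ l ≤ S.v l := by
  have h := radius_le_of_mem_repl h1 hN (mk_zero_t_mem_repl_currentSol h1 hN) (Nat.zero_le _) le_rfl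
  omega

theorem uncovered.v_lt_us_add (h : S.uncovered l) : S.v l < S.us l + S.ρ l := by
  rw [uncovered, covered] at h
  omega

theorem uncovered.us_pos (h : S.uncovered l) (h1 : 1 ≤ l) (hN : l ≤ S.N) : 0 < S.us l := by
  have := h.v_lt_us_add
  have := radius_le_v h1 hN
  omega

theorem uncovered.radius_pos (h : S.uncovered l) (h1 : 1 ≤ l) (hN : l ≤ S.N) : 0 < S.ρ l := by
  have := h.v_lt_us_add
  have := us_le h1 hN
  omega

theorem us_le_of_mem_reached (h1 : 1 ≤ l) (hN : l ≤ S.N) (hq : (u, s) ∈ S.reached l)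
    (hsq : (u, s) ∈ SqRect (S.req l) (5 * S.ρ l)) : S.us l ≤ u :=
  S.serv_min l h1 hN _ (reached_subset_repl_currentSol hN hq) hsq

theorem add_lt_t_of_mem_reached (h1 : 1 ≤ l) (hN : l ≤ S.N) (hq : (u, s) ∈ S.reached l)
    (hs : s ≤ S.t l) (hu : u < S.us l) (hv : S.v l ≤ u + 5 * S.ρ l) :
    s + 5 * S.ρ l < S.t l := by
  by_contra! hold
  refine hu.not_ge (us_le_of_mem_reached h1 hN hq
    ⟨Nat.sub_le_iff_le_add.2 hv, hu.le.trans (us_le h1 hN), Nat.sub_le_iff_le_add.2 hold, hs⟩)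

theorem isGreatest_column_us (h1 : 1 ≤ l) (hN : l ≤ S.N) (hpos : 0 < S.us l) :
    IsGreatest (S.column l (S.us l)) (S.ss l) := by
  obtain ⟨hmem, hleft, hright, hlow, hss⟩ := S.serv_mem l h1 hN
  refine ⟨⟨hss, mem_reached_of_mem_repl_currentSol h1 hN hpos hmem⟩, ?_⟩
  rintro τ ⟨hτ, hq⟩
  by_contra! hlt
  exact hlt.not_ge (S.serv_late l h1 hN (S.us l, τ) (reached_subset_repl_currentSol hN hq)
    ⟨hleft, hright, hlow.trans hlt.le, hτ⟩ rfl)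

theorem uncovered.exists_isGreatest_column (h : S.uncovered l) (h1 : 1 ≤ l) (hN : l ≤ S.N) :
    ∃ u s, IsGreatest (S.column l u) s ∧ S.us l ≤ u ∧ u ≤ S.v l ∧ s + S.ρ l = S.t l := by
  have hmem := S.closest_mem l h1 hN
  have hdist := S.closest_dist l h1 hN
  have hle : S.u' l ≤ S.v l ∧ S.s' l ≤ S.t l := by
    by_contra hnle
    rw [distInf, if_neg hnle] at hdist
    exact ENat.top_ne_natCast _ hdist
  rw [distInf, if_pos hle, Nat.cast_inj] at hdist
  simp only at hdist
  have hsq : (S.u' l, S.s' l) ∈ SqRect (S.req l) (5 * S.ρ l) := by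
    simp only [SqRect, req, Set.mem_ofPred_eq]
    omega
  have hus : S.us l ≤ S.u' l := S.serv_min l h1 hN _ hmem hsq
  have hlt := h.v_lt_us_add
  have hpos := h.us_pos h1 hN
  refine ⟨S.u' l, S.s' l, ⟨⟨hle.2, ?_⟩, ?_⟩, hus, hle.1, by omega⟩
  · exact mem_reached_of_mem_repl_currentSol h1 hN (by omega) hmem
  · rintro τ ⟨hτ, hq⟩
    exact S.closest_late l h1 hN τ hτ (reached_subset_repl_currentSol hN hq)

theorem mem_reached_of_isGreatest_column (h1 : 1 ≤ j) (hjl : j < l) (hN : l ≤ S.N)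
    (hlatest : IsGreatest (S.column l u) s) (hs : s < S.t j) (hu : u < S.us j) :
    (u, s) ∈ S.reached j := by
  obtain ⟨⟨-, k, hk1, hkl, hk⟩, hmax⟩ := hlatest
  rcases lt_trichotomy k j with hkj | rfl | hjk
  · exact ⟨k, hk1, hkj, hk⟩
  · exact absurd (us_le_of_mem_trail hk) hu.not_ge
  · have hlate : S.t k ≤ s := hmax
      ⟨S.t_mono k l hkl.le hN, k, hk1, hkl, mk_t_mem_trail hk1 (by omega) hk⟩
    have hjk_time : S.t j ≤ S.t k := S.t_mono j k hjk.le (by omega)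
    omega

theorem add_lt_t_of_isGreatest_column (h1 : 1 ≤ j) (hjl : j < l) (hN : l ≤ S.N)
    (hlatest : IsGreatest (S.column l u) s) (hs : s < S.t j) (hu : u < S.us j)
    (hv : S.v j ≤ u + 5 * S.ρ j) : s + 5 * S.ρ j < S.t j :=
  add_lt_t_of_mem_reached h1 (by omega)
    (mem_reached_of_isGreatest_column h1 hjl hN hlatest hs hu) hs.le hu hv

namespace IsParent

theorem one_le (h : S.IsParent i j) : 1 ≤ j := h.1

theorem lt (h : S.IsParent i j) : j < i := h.2.1

theorem parent_le (h : S.IsParent i j) : i ≤ S.N := h.2.2.1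

theorem uncovered_sun (h : S.IsParent i j) : S.uncovered j := h.2.2.2.1

theorem uncovered_parent (h : S.IsParent i j) : S.uncovered i := h.2.2.2.2.1

theorem sun_le (h : S.IsParent i j) : j ≤ S.N := h.lt.le.trans h.parent_le

theorem one_le_parent (h : S.IsParent i j) : 1 ≤ i := h.one_le.trans h.lt.le

theorem t_le (h : S.IsParent i j) : S.t j ≤ S.t i := S.t_mono j i h.lt.le h.parent_le

theorem ballsEdgeDisjoint_of_lt (h : S.IsParent i j) (hjk : j < k) (hki : k < i)
    (hk : S.uncovered k) : BallsEdgeDisjoint (S.req j) (S.ρ j) (S.req k) (S.ρ k) :=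
  h.2.2.2.2.2.2 k hjk hki hk

theorem balls_meet (h : S.IsParent i j) :
    S.v j - S.v i < S.ρ j ∧ (S.v i - S.v j) + (S.t i - S.t j) < S.ρ i := by
  have hmeet := not_ballsEdgeDisjoint_iff.1 h.2.2.2.2.2.1
  simp only [req] at hmeet
  omega

theorem v_lt_v_add (h : S.IsParent i j) : S.v j < S.v i + S.ρ j := by
  have := h.balls_meet
  omega

theorem t_lt_t_add (h : S.IsParent i j) : S.t i < S.t j + S.ρ i := by
  have := h.balls_meet
  omega

theorem v_lt_us (h : S.IsParent i j) : S.v i < S.us j := by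
  by_contra! hle
  have hus := us_le h.one_le h.sun_le
  have hq : (min (S.v i) (S.v j), S.t j) ∈ S.reached i :=
    ⟨j, h.one_le, h.lt, Or.inr ⟨⟨le_min hle hus, min_le_right _ _⟩, rfl⟩⟩
  have hfar := radius_le_of_mem_reached h.one_le_parent h.parent_le hq (min_le_left _ _) h.t_le
  have := h.balls_meet
  omega

theorem four_mul_radius_le (h : S.IsParent i j) : 4 * S.ρ j ≤ S.ρ i := by
  obtain ⟨u, s, hlatest, hus, huv, hs⟩ :=
    h.uncovered_parent.exists_isGreatest_column h.one_le_parent h.parent_le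
  have hvi := h.uncovered_parent.v_lt_us_add
  have hvj := h.v_lt_v_add
  have ht := h.t_lt_t_add
  have hti := h.t_le
  by_contra! hsmall
  have hold := add_lt_t_of_isGreatest_column h.one_le h.lt h.parent_le hlatest (by omega)
    (huv.trans_lt h.v_lt_us) (by omega)
  omega

theorem v_lt_us_of_lt (h : S.IsParent i j) (hjk : j < k) (hki : k < i) (hv : S.v i ≤ S.v k) :
    S.v i < S.us k := by
  by_contra! hle
  have hq : (S.v i, S.t k) ∈ S.reached i :=
    ⟨k, h.one_le.trans hjk.le, hki, Or.inr ⟨⟨hle, hv⟩, rfl⟩⟩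
  have hki_time := S.t_mono k i hki.le h.parent_le
  have hfar := radius_le_of_mem_reached h.one_le_parent h.parent_le hq le_rfl hki_time
  have hjk_time := S.t_mono j k hjk.le (hki.le.trans h.parent_le)
  have ht := h.t_lt_t_add
  omega

theorem exists_forall_mem_reached (h : S.IsParent i j) (hl : l ≤ i) (hq : (u, s) ∈ S.reached l)
    (hiu : S.v i < u) (huj : u < S.us j) (hs : S.t j ≤ s) :
    ∃ w, S.v i < w ∧ w ≤ u ∧
      ∀ τ ∈ Set.Icc (S.t j) (S.t j + 4 * S.ρ j), (w, τ) ∈ S.reached l := by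
  induction l using Nat.strong_induction_on generalizing u s with | _ l ih
  obtain ⟨k, hk1, hkl, hk⟩ := hq
  have hkN : k ≤ S.N := by have := h.parent_le; omega
  have hvj := h.v_lt_v_add
  rcases lt_trichotomy k j with hkj | rfl | hjk
  · have hj : (u, S.t j) ∈ S.reached j :=
      ⟨k, hk1, hkj, mem_trail_of_le hk1 hkN hk (S.t_mono k j hkj.le h.sun_le) hs⟩
    have := add_lt_t_of_mem_reached h.one_le h.sun_le hj le_rfl huj (by omega)
    omega
  · exact absurd (us_le_of_mem_trail hk) huj.not_ge
  · have husu : S.us k ≤ u := us_le_of_mem_trail hk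
    have huv : u ≤ S.v k := by
      have := us_le hk1 hkN
      rw [mem_trail] at hk
      omega
    have hius : S.v i < S.us k := h.v_lt_us_of_lt hjk (by omega) (by omega)
    have hserv := isGreatest_column_us hk1 hkN (by omega)
    rcases le_or_gt (S.t j) (S.ss k) with hss | hss
    · obtain ⟨w, hiw, hwu, hw⟩ := ih k hkl (by omega) hserv.1.2 hius (by omega) hss
      exact ⟨w, hiw, hwu.trans husu, fun τ hτ => reached_mono hkl.le (hw τ hτ)⟩
    · have hold := add_lt_t_of_isGreatest_column h.one_le hjk hkN hserv hss (by omega) (by omega)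
      have hjk_time := S.t_mono j k hjk.le hkN
      have hρ := t_le_ss_add hk1 hkN
      -- `hold` and `hρ` give `ρ j < ρ k`, so the vertical path of `k` spans the whole interval.
      exact ⟨S.us k, hius, husu, fun τ ⟨hτl, hτr⟩ =>
        ⟨k, hk1, hkl, Or.inl ⟨rfl, by simp only; omega, by simp only; omega⟩⟩⟩

theorem exists_forall_mem_reached_of_lt (hj : S.IsParent i j) (hk : S.IsParent i k) (hjk : j < k) :
    ∃ w, S.v i < w ∧ w ≤ S.v k ∧
      ∀ τ ∈ Set.Icc (S.t j) (S.t j + 4 * S.ρ j), (w, τ) ∈ S.reached k := by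
  rcases le_or_gt (S.us j) (S.v k) with hle | hlt
  · exact ⟨S.us j, hj.v_lt_us, hle, fun τ ⟨hτl, hτr⟩ =>
      ⟨j, hj.one_le, hjk, Or.inl ⟨rfl, (ss_le hj.one_le hj.sun_le).trans hτl, hτr⟩⟩⟩
  obtain ⟨u, s, hlatest, hus, huv, hs⟩ :=
    hk.uncovered_sun.exists_isGreatest_column hk.one_le hk.sun_le
  have hiu : S.v i < u := hk.v_lt_us.trans_le hus
  have huj : u < S.us j := huv.trans_lt hlt
  rcases le_or_gt (S.t j) s with hjs | hsj
  · obtain ⟨w, hiw, hwu, hw⟩ := hj.exists_forall_mem_reached hk.lt.le hlatest.1.2 hiu huj hjs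
    exact ⟨w, hiw, hwu.trans huv, hw⟩
  · have husj := us_le hj.one_le hj.sun_le
    have hvj := hj.v_lt_v_add
    have hjk_time := S.t_mono j k hjk.le hk.sun_le
    have hmeet : ¬ BallsEdgeDisjoint (S.req j) (S.ρ j) (S.req k) (S.ρ k) := by
      rw [not_ballsEdgeDisjoint_iff]
      simp only [req]
      omega
    exact absurd (hj.ballsEdgeDisjoint_of_lt hjk hk.lt hk.uncovered_sun) hmeet

theorem t_add_le_t_of_lt (hj : S.IsParent i j) (hk : S.IsParent i k) (hjk : j < k) :
    S.t j + 4 * S.ρ j + S.ρ k ≤ S.t k := by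
  obtain ⟨w, hiw, hwk, hw⟩ := hj.exists_forall_mem_reached_of_lt hk hjk
  have hvk := hk.v_lt_v_add
  have hpos := hk.uncovered_sun.radius_pos hk.one_le hk.sun_le
  have hjk_time := S.t_mono j k hjk.le hk.sun_le
  have hfar := radius_le_of_mem_reached (s := min (S.t j + 4 * S.ρ j) (S.t k)) hk.one_le hk.sun_le
    (hw _ ⟨by omega, by omega⟩) hwk (min_le_right _ _)
  omega

end IsParent

theorem two_mul_sum_radii_le_of_isParent (C : Finset ℕ) (hC : ∀ j ∈ C, S.IsParent i j) :
    2 * ∑ j ∈ C, S.ρ j ≤ S.ρ i := by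
  have hdisj : (C : Set ℕ).PairwiseDisjoint fun j => Ico (S.t j) (S.t j + 4 * S.ρ j) := by
    have disjoint_of_lt : ∀ j ∈ C, ∀ k ∈ C, j < k →
        Disjoint (Ico (S.t j) (S.t j + 4 * S.ρ j)) (Ico (S.t k) (S.t k + 4 * S.ρ k)) :=
      fun j hj k hk hjk => Ico_disjoint_Ico_consecutive _ _ _ |>.mono_right <|
        Ico_subset_Ico_left (by have := (hC j hj).t_add_le_t_of_lt (hC k hk) hjk; omega)
    intro j hj k hk hne
    rcases hne.lt_or_gt with hjk | hkj
    · exact disjoint_of_lt j hj k hk hjk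
    · exact (disjoint_of_lt k hk j hj hkj).symm
  have hsub : (C.biUnion fun j => Ico (S.t j) (S.t j + 4 * S.ρ j)) ⊆
      Ico (S.t i - S.ρ i) (S.t i + S.ρ i) := by
    refine biUnion_subset.2 fun j hj => Ico_subset_Ico ?_ ?_
    · have := (hC j hj).t_lt_t_add
      omega
    · have := (hC j hj).t_le
      have := (hC j hj).four_mul_radius_le
      omega
  have hcard : 4 * ∑ j ∈ C, S.ρ j ≤ 2 * S.ρ i := calc
    4 * ∑ j ∈ C, S.ρ j = #(C.biUnion fun j => Ico (S.t j) (S.t j + 4 * S.ρ j)) := by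
      simp only [card_biUnion hdisj, Nat.card_Ico, Nat.add_sub_cancel_left, mul_sum]
    _ ≤ #(Ico (S.t i - S.ρ i) (S.t i + S.ρ i)) := card_le_card hsub
    _ ≤ 2 * S.ρ i := by
      rw [Nat.card_Ico]
      omega
  omega

theorem wellFounded_isParent : WellFounded fun j i => S.IsParent i j :=
  Subrelation.wf IsParent.lt wellFounded_lt

end SquareRun

theorem tree_radii_le_twice_root_general (S : SquareRun) (i : ℕ) (T : Finset ℕ)
    (hT : ∀ j ∈ T, S.InTree j i) : ∑ j ∈ T, S.ρ j ≤ 2 * S.ρ i :=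
  sum_le_two_nsmul_of_reflTransGen SquareRun.wellFounded_isParent
    (fun _ => SquareRun.two_mul_sum_radii_le_of_isParent) i T hT

/-- For every root request `i*`, the sum of the radii over its tree is at most
twice its own radius: `Σ_{i∈Tree(i*)} ρ(i) ≤ 2·ρ(i*)`. -/
theorem tree_radii_le_twice_root (S : SquareRun) (iStar : ℕ)
    (hroot : S.IsRoot iStar) (T : Finset ℕ)
    (hT : ∀ i, i ∈ T ↔ S.InTree i iStar) :
    ∑ i ∈ T, S.ρ i ≤ 2 * S.ρ iStar :=
  tree_radii_le_twice_root_general S iStar T fun i => (hT i).1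
end

section
/- There exist a constant c>0 and a deterministic online RSA algorithm A such that for every input sequence Q of N points, cost(A,Q) ≤ c·max(1, log N/log log N)·opt(Q). -/
open MeasureTheory
open scoped ENNReal

/-- A point of the plane. -/
abbrev Pt : Type := ℝ × ℝ

/-- `a` and `b` span an axis-parallel closed segment lying in the closed
positive quadrant. -/
def axisSeg (a b : Pt) : Prop :=
  (a.1 = b.1 ∨ a.2 = b.2) ∧ 0 ≤ a.1 ∧ 0 ≤ a.2 ∧ 0 ≤ b.1 ∧ 0 ≤ b.2

/-- `S` is a finite union of axis-parallel closed segments in the quadrant. -/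
def IsRectilinearUnion (S : Set Pt) : Prop :=
  ∃ (k : ℕ) (a b : Fin k → Pt), (∀ j, axisSeg (a j) (b j)) ∧
    S = ⋃ j, segment ℝ (a j) (b j)

/-- There is a rectilinear path in `S` from the origin to `p` that is both
`x`-monotone and `y`-monotone. -/
def MonPathTo (S : Set Pt) (p : Pt) : Prop :=
  ∃ f : ℝ → Pt, ContinuousOn f (Set.Icc (0 : ℝ) 1) ∧ f 0 = (0, 0) ∧ f 1 = p ∧
    (∀ s ∈ Set.Icc (0 : ℝ) 1, f s ∈ S) ∧
    (∀ s₁ ∈ Set.Icc (0 : ℝ) 1, ∀ s₂ ∈ Set.Icc (0 : ℝ) 1, s₁ ≤ s₂ →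
      (f s₁).1 ≤ (f s₂).1 ∧ (f s₁).2 ≤ (f s₂).2)

/-- A feasible RSA solution for the points of `Q`. -/
def FeasibleRSA (Q : List Pt) (S : Set Pt) : Prop :=
  IsRectilinearUnion S ∧ ∀ p ∈ Q, MonPathTo S p

/-- The cost of a solution: its total length (one-dimensional Hausdorff
measure). -/
noncomputable def rsaCost (S : Set Pt) : ℝ≥0∞ := μH[1] S

/-- The optimum cost `opt(Q)`: the infimum of the costs of feasible solutions. -/
noncomputable def optRSA (Q : List Pt) : ℝ≥0∞ :=
  sInf {c : ℝ≥0∞ | ∃ S : Set Pt, FeasibleRSA Q S ∧ rsaCost S = c}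

/-- A valid RSA input: points in the closed positive quadrant, given in
nondecreasing order of `y`-coordinate. -/
def ValidRSA (Q : List Pt) : Prop :=
  (∀ p ∈ Q, 0 ≤ p.1 ∧ 0 ≤ p.2) ∧ Q.Chain' (fun a b => a.2 ≤ b.2)

/-- The `y`-coordinate of the last point of `Q` (`0` if `Q` is empty). -/
def lastY (Q : List Pt) : ℝ := Q.getLast?.elim 0 Prod.snd

/-- A deterministic online RSA algorithm: it outputs a feasible solution on
every valid input sequence, the output only grows when a new point arrives, and
every newly added point of the solution has `y`-coordinate at least the
`y`-coordinate of the previously served request. -/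
def OnlineRSA (A : List Pt → Set Pt) : Prop :=
  (∀ Q, ValidRSA Q → FeasibleRSA Q (A Q)) ∧
  (∀ Q p, ValidRSA (Q ++ [p]) →
    A Q ⊆ A (Q ++ [p]) ∧ ∀ q ∈ A (Q ++ [p]) \ A Q, lastY Q ≤ q.2)

/-!
Let request `i` belong to epoch `e ≈ log log i` and let `w` be the binary logarithm of the largest
abscissa so far, rounded up. In the phase `(e, w)` the algorithm uses a hierarchical grid with root
side `2 ^ w`, branching `b ≈ √(log N)` and depth `k ≈ log N / log log N`, where `log N ≈ 2 ^ e`.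
Every touched cell carries a vertical line, kept until one side length above the cell. A request is
connected horizontally to the nearest line on its left, say at distance `D`, and touches the cells
within the *radius* `r = D / (2 b)` to its left.

A monotone path to a request has length at least `r` inside the square of side `r` with upper right
corner at the request, so disjoint squares of this kind bound the optimum from below.
* If the squares of two requests of one phase intersected, the earlier request would have left a
  line so close to the later one that its `D` would be smaller. Hence the horizontal cost of an
  epoch is `O(b)` times the optimum, radii below the finest side length being negligible.
* Touched cells of one level are charged to the radius of a toucher if they are smaller than it.
  Otherwise the squares of one cell side at their touchers are disjoint up to six residue classes.
  Hence the vertical cost of an epoch is `O(k)` times the optimum.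
* The width `w` grows with time. A square reaching below a request of smaller width therefore meets
  the horizontal line where the width increased. Such squares of one width have disjoint projections
  to `[0, 2 ^ w]`, which bounds their total by a geometric series over the widths; the other squares
  of different widths are disjoint.

The sum over the epochs is again geometric, dominated by its last term `O(log N / log log N)`.
-/

namespace IsRectilinearUnion

lemma empty : IsRectilinearUnion ∅ :=
  ⟨0, Fin.elim0, Fin.elim0, fun j => j.elim0, by simp⟩

lemma of_axisSeg {a b : Pt} (h : axisSeg a b) : IsRectilinearUnion (segment ℝ a b) :=
  ⟨1, fun _ => a, fun _ => b, fun _ => h, (Set.iUnion_const _).symm⟩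

lemma union {S T : Set Pt} (hS : IsRectilinearUnion S) (hT : IsRectilinearUnion T) :
    IsRectilinearUnion (S ∪ T) := by
  obtain ⟨k, a, b, h, rfl⟩ := hS
  obtain ⟨l, a', b', h', rfl⟩ := hT
  refine ⟨k + l, Fin.append a a', Fin.append b b', ?_, ?_⟩
  · exact Fin.addCases (by simpa using h) (by simpa using h')
  · ext z
    simp only [Set.mem_union, Set.mem_iUnion]
    rw [← finSumFinEquiv.exists_congr_right, Sum.exists]
    simp

lemma biUnion {ι : Type*} {s : Set ι} (hs : s.Finite) {f : ι → Set Pt}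
    (h : ∀ a ∈ s, IsRectilinearUnion (f a)) : IsRectilinearUnion (⋃ a ∈ s, f a) := by
  induction s, hs using Set.Finite.induction_on with
  | empty => simpa using empty
  | insert _ _ ih =>
    rw [Set.biUnion_insert]
    exact (h _ (Set.mem_insert _ _)).union (ih fun b hb => h b (Set.mem_insert_of_mem _ hb))

end IsRectilinearUnion

lemma segment_subset_segment_right_of_fst_le {c u v w : ℝ} (huv : u ≤ v) (hvw : v ≤ w) :
    segment ℝ ((u, c) : Pt) (v, c) ⊆ segment ℝ (u, c) (w, c) := by
  rw [← Prod.image_mk_segment_left, ← Prod.image_mk_segment_left, segment_eq_Icc huv,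
    segment_eq_Icc (huv.trans hvw)]
  exact Set.image_mono (Set.Icc_subset_Icc_right hvw)

namespace MonPathTo

variable {S T : Set Pt} {p q : Pt}

lemma mono (h : MonPathTo S p) (hST : S ⊆ T) : MonPathTo T p := by
  obtain ⟨f, hc, hf0, hf1, hS, hm⟩ := h
  exact ⟨f, hc, hf0, hf1, fun s hs => hST (hS s hs), hm⟩

lemma zero (h : (0 : Pt) ∈ S) : MonPathTo S 0 :=
  ⟨fun _ => 0, continuousOn_const, rfl, rfl, fun _ _ => h, fun _ _ _ _ _ => ⟨le_rfl, le_rfl⟩⟩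

lemma extend (h : MonPathTo S p) (hseg : segment ℝ p q ⊆ S) (hpq : p ≤ q) : MonPathTo S q := by
  obtain ⟨f, hc, hf0, hf1, hS, hm⟩ := h
  have hmem : ∀ s ∈ Set.Icc (0 : ℝ) 1, min (2 * s) 1 ∈ Set.Icc (0 : ℝ) 1 := fun s hs =>
    ⟨le_min (by linarith [hs.1]) zero_le_one, min_le_right _ _⟩
  refine ⟨fun s => f (min (2 * s) 1) + (max (2 * s - 1) 0) • (q - p), ?_, ?_, ?_, ?_, ?_⟩
  · exact (hc.comp (by fun_prop) hmem).add (by fun_prop)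
  · simp [hf0]
  · norm_num [hf1]
  · intro s hs
    rcases le_total (2 * s) 1 with h | h
    · simpa [h] using hS _ (hmem s hs)
    · rw [segment_eq_image'] at hseg
      simp only [min_eq_right h, max_eq_left (sub_nonneg.2 h), hf1]
      refine hseg ⟨2 * s - 1, ⟨sub_nonneg.2 h, by linarith [hs.2]⟩, rfl⟩
  · intro s₁ hs₁ s₂ hs₂ hle
    have hf := hm _ (hmem s₁ hs₁) _ (hmem s₂ hs₂) (by gcongr)
    exact add_le_add (Prod.mk_le_mk.2 hf)
      (smul_le_smul_of_nonneg_right (by gcongr) (sub_nonneg.2 hpq))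

end MonPathTo

namespace RSA

/-! ### Lower bounds for the optimum -/

lemma ofReal_sub_le_hausdorffMeasure {X : Type*} [EMetricSpace X] [MeasurableSpace X]
    [BorelSpace X] {f : X → ℝ} (hf : LipschitzWith 1 f) {A : Set X} {a b : ℝ}
    (h : Set.Ico a b ⊆ f '' A) : ENNReal.ofReal (b - a) ≤ μH[1] A :=
  calc ENNReal.ofReal (b - a) = μH[1] (Set.Ico a b) := by
        rw [hausdorffMeasure_real, Real.volume_Ico]
    _ ≤ μH[1] (f '' A) := measure_mono h
    _ ≤ μH[1] A := by simpa using hf.hausdorffMeasure_image_le zero_le_one A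

/-- The half-open square of side `ρ` with upper right corner `p`. -/
def box (p : Pt) (ρ : ℝ) : Set Pt := Set.Ioc (p.1 - ρ) p.1 ×ˢ Set.Ioc (p.2 - ρ) p.2

lemma measurableSet_box (p : Pt) (ρ : ℝ) : MeasurableSet (box p ρ) :=
  measurableSet_Ioc.prod measurableSet_Ioc

lemma mem_box_iff_dist_lt {p z : Pt} {ρ : ℝ} (h : z ≤ p) : z ∈ box p ρ ↔ dist z p < ρ := by
  have h₁ : |z.1 - p.1| = p.1 - z.1 := by rw [abs_sub_comm, abs_of_nonneg (sub_nonneg.2 h.1)]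
  have h₂ : |z.2 - p.2| = p.2 - z.2 := by rw [abs_sub_comm, abs_of_nonneg (sub_nonneg.2 h.2)]
  simp only [box, Set.mem_prod, Set.mem_Ioc, h.1, h.2, and_true, Prod.dist_eq, Real.dist_eq,
    max_lt_iff, h₁, h₂, sub_lt_comm]

-- The distance to `p` decreases continuously from `‖p‖` to `0` along the path.
lemma ofReal_le_hausdorffMeasure_inter_box {S : Set Pt} {p : Pt} {ρ : ℝ} (h : MonPathTo S p)
    (hρ : ρ ≤ ‖p‖) : ENNReal.ofReal ρ ≤ μH[1] (S ∩ box p ρ) := by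
  obtain ⟨f, hc, hf0, hf1, hS, hm⟩ := h
  have hdist : LipschitzWith 1 fun z : Pt => dist z p := LipschitzWith.dist_left p
  rw [← sub_zero ρ]
  refine ofReal_sub_le_hausdorffMeasure hdist fun t ht => ?_
  have hivt := intermediate_value_Icc' zero_le_one (hdist.continuous.comp_continuousOn hc)
  obtain ⟨s, hs, hst⟩ := hivt (show t ∈ Set.Icc _ _ from
    ⟨by simpa [hf1] using ht.1, by
      simpa [hf0, ← Prod.zero_eq_mk] using ht.2.le.trans hρ⟩)
  have hle : f s ≤ p := hf1 ▸ hm s hs 1 (by simp) hs.2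
  exact ⟨f s, ⟨hS s hs, by
    rw [sub_zero, mem_box_iff_dist_lt hle]; exact hst.trans_lt ht.2⟩, hst⟩

lemma norm_le_of_monPathTo {S : Set Pt} {p : Pt} (hS : μH[1] S ≠ ∞) (h : MonPathTo S p) :
    ‖p‖ ≤ μH[1].real S :=
  (ENNReal.ofReal_le_iff_le_toReal hS).1
    ((ofReal_le_hausdorffMeasure_inter_box h le_rfl).trans (measure_mono Set.inter_subset_left))

lemma sum_le_of_pairwiseDisjoint_box {ι : Type*} {S : Set Pt} (hS : μH[1] S ≠ ∞) {s : Finset ι}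
    {q : ι → Pt} {ρ : ι → ℝ} (hq : ∀ a ∈ s, MonPathTo S (q a)) (hρ : ∀ a ∈ s, ρ a ≤ ‖q a‖)
    (hd : (s : Set ι).PairwiseDisjoint fun a => box (q a) (ρ a)) :
    ∑ a ∈ s, ρ a ≤ μH[1].real S := by
  have : IsFiniteMeasure (μH[1].restrict S) := ⟨by simpa using hS.lt_top⟩
  calc ∑ a ∈ s, ρ a
      ≤ ∑ a ∈ s, (μH[1].restrict S).real (box (q a) (ρ a)) := by
        refine Finset.sum_le_sum fun a ha => ?_
        rw [measureReal_def, ← ENNReal.ofReal_le_iff_le_toReal (measure_ne_top _ _),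
          Measure.restrict_apply (measurableSet_box _ _), Set.inter_comm]
        exact ofReal_le_hausdorffMeasure_inter_box (hq a ha) (hρ a ha)
    _ = (μH[1].restrict S).real (⋃ a ∈ s, box (q a) (ρ a)) :=
        (measureReal_biUnion_finset hd fun a _ => measurableSet_box _ _).symm
    _ ≤ (μH[1].restrict S).real Set.univ := measureReal_mono (Set.subset_univ _)
    _ = μH[1].real S := by rw [measureReal_restrict_apply MeasurableSet.univ, Set.univ_inter]

lemma sum_sub_le_of_pairwiseDisjoint_Ioc {ι : Type*} {s : Finset ι} {l r : ι → ℝ} {c d : ℝ}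
    (hcd : c ≤ d) (hsub : ∀ a ∈ s, Set.Ioc (l a) (r a) ⊆ Set.Ioc c d)
    (hd : (s : Set ι).PairwiseDisjoint fun a => Set.Ioc (l a) (r a)) :
    ∑ a ∈ s, (r a - l a) ≤ d - c :=
  calc ∑ a ∈ s, (r a - l a) ≤ ∑ a ∈ s, volume.real (Set.Ioc (l a) (r a)) :=
        Finset.sum_le_sum fun a _ => by simp [Real.volume_real_Ioc]
    _ = volume.real (⋃ a ∈ s, Set.Ioc (l a) (r a)) :=
        (measureReal_biUnion_finset hd (fun _ _ => measurableSet_Ioc) (by simp)).symm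
    _ ≤ volume.real (Set.Ioc c d) :=
        measureReal_mono (Set.iUnion₂_subset hsub) (by simp)
    _ = d - c := Real.volume_real_Ioc_of_le hcd

lemma sum_two_zpow_le {F : Finset ℤ} {M : ℤ} (hM : ∀ w ∈ F, w ≤ M) :
    ∑ w ∈ F, (2 : ℝ) ^ w ≤ 2 ^ (M + 1) := by
  induction F using Finset.induction_on_max generalizing M with
  | empty => rw [Finset.sum_empty]; positivity
  | insert a F ha ih =>
    have hF : ∑ w ∈ F, (2 : ℝ) ^ w ≤ 2 ^ a := by
      simpa using ih (M := a - 1) fun w hw => Int.le_sub_one_of_lt (ha w hw)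
    calc ∑ w ∈ insert a F, (2 : ℝ) ^ w = 2 ^ a + ∑ w ∈ F, (2 : ℝ) ^ w :=
          Finset.sum_insert fun h => (ha a h).false
      _ ≤ 2 ^ (a + 1) := by rw [zpow_add_one₀ two_ne_zero]; linarith
      _ ≤ 2 ^ (M + 1) :=
          zpow_le_zpow_right₀ one_le_two (by have := hM a (Finset.mem_insert_self a F); lia)

/-! ### The grid algorithm -/

/-- The epoch of request `i`: about `log log i`. The parameters of the grid depend only on it. -/
def epoch (i : ℕ) : ℕ := Nat.clog 2 (Nat.clog 2 (i + 1))

/-- The ratio of consecutive side lengths in the grid of epoch `e`: about `√(log N)`, a power of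
two. -/
def branching (e : ℕ) : ℕ := 2 ^ (e / 2 + 1)

/-- The index of the finest level in the grid of epoch `e`: about `log N / log log N`, large enough
for the side length to have dropped by a factor `N` there. -/
def depth (e : ℕ) : ℕ := 2 ^ e / (e / 2 + 1) + 1

/-- The side length of the cells of level `k` in phase `φ = (e, w)`: the root cell has side `2 ^ w`,
and every cell of epoch `e` splits into `branching e ^ 2` cells of the next level. -/
noncomputable def sideLength (φ : ℕ × ℤ) (k : ℕ) : ℝ := 2 ^ φ.2 / (branching φ.1 : ℝ) ^ k

/-- A cell of the grid used in phase `phase`: the square of side `s = sideLength phase level` whose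
lower left corner is `(col * s, row * s)`. -/
@[ext] structure Cell where
  /-- epoch and width -/
  phase : ℕ × ℤ
  level : ℕ
  col : ℕ
  row : ℕ

/-- The side length of a cell. -/
noncomputable def Cell.side (κ : Cell) : ℝ := sideLength κ.phase κ.level

section State

variable (p : ℕ → Pt) (a : ℕ → ℝ)

/-- The exponent of the least power of two bounding the abscissas of the requests `0, …, i` (`0` if
these all vanish). -/
noncomputable def width (i : ℕ) : ℤ := Int.clog 2 (partialSups (fun j => (p j).1) i)

/-- The phase of request `i`. Cells of different phases never interact. -/
noncomputable def phase (i : ℕ) : ℕ × ℤ := (epoch i, width p i)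

/-- The scale on which request `i` influences the vertical lines, when it is connected horizontally
to the abscissa `a i`. -/
noncomputable def radius (i : ℕ) : ℝ := ((p i).1 - a i) / (2 * branching (epoch i))

/-- Request `i` touches the cell `κ`: the last part, of length `radius p a i`, of its horizontal
connection meets the cell. Cells in column `0` are ignored, since the `y`-axis serves them. -/
structure Touches (i : ℕ) (κ : Cell) : Prop where
  phase_eq : κ.phase = phase p i
  level_le : κ.level ≤ depth κ.phase.1
  one_le_col : 1 ≤ κ.col
  row_mul_le : κ.row * κ.side ≤ (p i).2
  lt_row_succ_mul : (p i).2 < (κ.row + 1) * κ.side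
  col_mul_le : κ.col * κ.side ≤ (p i).1
  lt_col_succ_mul : (p i).1 - radius p a i < (κ.col + 1) * κ.side

/-- The requests before request `i` touching the cell `κ`. -/
def touchers (i : ℕ) (κ : Cell) : Set ℕ := {j | j < i ∧ Touches p a j κ}

/-- The abscissa which the toucher `j` of the cell `κ` proposes for the vertical line of `κ`. -/
noncomputable def proposal (κ : Cell) (j : ℕ) : ℝ :=
  max ((p j).1 - radius p a j) (κ.col * κ.side)

/-- The abscissa of the vertical line of the cell `κ` when request `i` arrives: the least proposal
so far (`0` if there is none). -/
noncomputable def linePos (i : ℕ) (κ : Cell) : ℝ := sInf (proposal p a κ '' touchers p a i κ)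

/-- The cells whose vertical line is extended to the height of request `i`: those touched before, up
to one side length above their upper edge. -/
def live (i : ℕ) : Set Cell :=
  {κ | κ.phase = phase p i ∧ (p i).2 ≤ (κ.row + 2) * κ.side ∧ (touchers p a i κ).Nonempty}

/-- The abscissas of the vertical lines extended to the height of request `i`: the `y`-axis and the
lines of the live cells. -/
def lines (i : ℕ) : Set ℝ := insert 0 (linePos p a i '' live p a i)

/-- The height reached by the vertical lines before request `i` arrives. -/
def height : ℕ → ℝ
  | 0 => 0
  | i + 1 => (p i).2

/-- The segments drawn when request `i` arrives. -/
def stroke (i : ℕ) : Set Pt :=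
  segment ℝ (a i, (p i).2) (p i) ∪
    ⋃ c ∈ lines p a i, segment ℝ (c, height p i) (c, height p (i + 1))

/-- The segments drawn for the first `n` requests. -/
def drawing (n : ℕ) : Set Pt := ⋃ i ∈ Finset.range n, stroke p a i

/-- The abscissa from which request `i` is connected horizontally: the rightmost vertical line not
to the right of it. -/
noncomputable def anchor (i : ℕ) : ℝ :=
  sSup (lines p (fun j => if j < i then anchor j else 0) i ∩ Set.Iic (p i).1)
termination_by i

/-- The abscissas `a i` result from running the algorithm on the requests `p i`. -/
structure IsRun : Prop where
  nonneg : ∀ i, 0 ≤ p i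
  monotone_snd : Monotone fun i => (p i).2
  isGreatest : ∀ i, IsGreatest (lines p a i ∩ Set.Iic (p i).1) (a i)

end State

/-- The requests in `Q`, with the last one repeated forever. -/
def requests (Q : List Pt) (i : ℕ) : Pt := Q.getD (min i (Q.length - 1)) 0

/-- The output of the grid algorithm on the input `Q`. -/
noncomputable def gridAlgorithm (Q : List Pt) : Set Pt :=
  drawing (requests Q) (anchor (requests Q)) Q.length

lemma sideLength_pos (φ : ℕ × ℤ) (k : ℕ) : 0 < sideLength φ k := by
  unfold sideLength branching; positivity

lemma Cell.side_pos (κ : Cell) : 0 < κ.side := sideLength_pos _ _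

lemma two_le_branching (e : ℕ) : (2 : ℝ) ≤ branching e := by
  unfold branching; exact_mod_cast Nat.le_self_pow (Nat.succ_ne_zero _) 2

lemma branching_pos (e : ℕ) : (0 : ℝ) < branching e := two_pos.trans_le (two_le_branching e)

lemma epoch_le_iff {i e : ℕ} : epoch i ≤ e ↔ i < 2 ^ 2 ^ e := by
  rw [epoch, Nat.clog_le_iff_le_pow one_lt_two, Nat.clog_le_iff_le_pow one_lt_two,
    Nat.succ_le_iff]

lemma epoch_mono : Monotone epoch := fun _ _ h =>
  Nat.clog_mono_right _ (Nat.clog_mono_right _ (Nat.succ_le_succ h))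

section Lines

variable {p : ℕ → Pt} {a : ℕ → ℝ} {i j i' : ℕ} {κ : Cell}

lemma fst_le_two_zpow_width (p : ℕ → Pt) (i : ℕ) : (p i).1 ≤ 2 ^ width p i :=
  calc (p i).1 ≤ partialSups (fun j => (p j).1) i := le_partialSups (fun j => (p j).1) i
    _ ≤ 2 ^ width p i := by exact_mod_cast Int.self_le_zpow_clog (R := ℝ) one_lt_two _

lemma width_le_width (hj : 0 < (p j).1) (hji : j ≤ i) (h : i ≤ i') : width p i ≤ width p i' :=
  Int.clog_mono_right (hj.trans_le (le_partialSups_of_le (fun j => (p j).1) hji))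
    ((partialSups fun j => (p j).1).monotone h)

lemma phase_le_phase (hj : 0 < (p j).1) (hji : j ≤ i) (h : i ≤ i') : phase p i ≤ phase p i' :=
  ⟨epoch_mono h, width_le_width hj hji h⟩

lemma Touches.side_le_fst (h : Touches p a i κ) : κ.side ≤ (p i).1 :=
  (le_mul_of_one_le_left κ.side_pos.le (by exact_mod_cast h.one_le_col)).trans h.col_mul_le

lemma Touches.fst_pos (h : Touches p a i κ) : 0 < (p i).1 := κ.side_pos.trans_le h.side_le_fst

lemma finite_setOf_touches (p : ℕ → Pt) (a : ℕ → ℝ) (i : ℕ) : {κ | Touches p a i κ}.Finite := by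
  let cell (t : ℕ × ℕ × ℕ) : Cell := ⟨phase p i, t.1, t.2.1, t.2.2⟩
  let bound (k : ℕ) (z : ℝ) : Set ℕ := Set.Iic ⌊z / sideLength (phase p i) k⌋₊
  have hfin : (⋃ k ∈ Set.Iic (depth (epoch i)),
      cell '' ({k} ×ˢ (bound k (p i).1 ×ˢ bound k (p i).2))).Finite :=
    (Set.finite_Iic _).biUnion fun k _ =>
      ((Set.finite_singleton k).prod ((Set.finite_Iic _).prod (Set.finite_Iic _))).image _
  refine hfin.subset ?_
  rintro ⟨_, k, m, n⟩ h
  obtain rfl := h.phase_eq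
  refine Set.mem_biUnion (show k ∈ Set.Iic _ from h.level_le) ⟨(k, m, n), ⟨rfl, ?_, ?_⟩, rfl⟩
  · exact Nat.le_floor ((le_div_iff₀ (sideLength_pos _ _)).2 h.col_mul_le)
  · exact Nat.le_floor ((le_div_iff₀ (sideLength_pos _ _)).2 h.row_mul_le)

lemma finite_setOf_nonempty_touchers (p : ℕ → Pt) (a : ℕ → ℝ) (i : ℕ) :
    {κ | (touchers p a i κ).Nonempty}.Finite :=
  ((Set.finite_Iio i).biUnion fun j _ => finite_setOf_touches p a j).subset
    fun _ ⟨_, hj, h⟩ => Set.mem_biUnion hj h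

lemma finite_live (p : ℕ → Pt) (a : ℕ → ℝ) (i : ℕ) : (live p a i).Finite :=
  (finite_setOf_nonempty_touchers p a i).subset fun _ h => h.2.2

lemma finite_lines (p : ℕ → Pt) (a : ℕ → ℝ) (i : ℕ) : (lines p a i).Finite :=
  ((finite_live p a i).image _).insert 0

lemma finite_touchers (p : ℕ → Pt) (a : ℕ → ℝ) (i : ℕ) (κ : Cell) : (touchers p a i κ).Finite :=
  (Set.finite_Iio i).subset fun _ hj => hj.1

lemma isLeast_linePos (h : (touchers p a i κ).Nonempty) :
    IsLeast (proposal p a κ '' touchers p a i κ) (linePos p a i κ) :=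
  have hfin := (finite_touchers p a i κ).image (proposal p a κ)
  ⟨(h.image _).csInf_mem hfin, fun _ hc => csInf_le hfin.bddBelow hc⟩

lemma col_mul_side_le_linePos (h : (touchers p a i κ).Nonempty) :
    κ.col * κ.side ≤ linePos p a i κ := by
  obtain ⟨j, -, hj⟩ := (isLeast_linePos h).1
  exact hj ▸ le_max_right _ _

lemma nonneg_of_mem_lines {c : ℝ} (hc : c ∈ lines p a i) : 0 ≤ c := by
  obtain rfl | ⟨κ, hκ, rfl⟩ := hc
  · exact le_rfl
  · exact (mul_nonneg (Nat.cast_nonneg _) κ.side_pos.le).trans (col_mul_side_le_linePos hκ.2.2)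

end Lines

section Congr

variable {p p' : ℕ → Pt} {a a' : ℕ → ℝ} {i : ℕ} {κ : Cell}

lemma width_congr (hp : Set.EqOn p p' (Set.Iic i)) : width p i = width p' i := by
  simp only [width, partialSups_apply]
  congr 1
  exact Finset.sup'_congr _ rfl fun j hj => by rw [hp (Finset.mem_Iic.1 hj)]

lemma phase_congr (hp : Set.EqOn p p' (Set.Iic i)) : phase p i = phase p' i :=
  congrArg _ (width_congr hp)

lemma radius_congr (hp : p i = p' i) (ha : a i = a' i) : radius p a i = radius p' a' i := by
  rw [radius, radius, hp, ha]

lemma Touches.congr (h : Touches p a i κ) (hp : Set.EqOn p p' (Set.Iic i)) (ha : a i = a' i) :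
    Touches p' a' i κ := by
  have hpi : p i = p' i := hp Set.self_mem_Iic
  exact ⟨h.phase_eq.trans (phase_congr hp), h.level_le, h.one_le_col, hpi ▸ h.row_mul_le,
    hpi ▸ h.lt_row_succ_mul, hpi ▸ h.col_mul_le,
    hpi ▸ radius_congr (p := p) hpi ha ▸ h.lt_col_succ_mul⟩

lemma touchers_subset (hp : Set.EqOn p p' (Set.Iio i)) (ha : Set.EqOn a a' (Set.Iio i)) :
    touchers p a i κ ⊆ touchers p' a' i κ := fun _ hj =>
  ⟨hj.1, hj.2.congr (hp.mono (Set.Iic_subset_Iio.2 hj.1)) (ha hj.1)⟩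

lemma touchers_congr (hp : Set.EqOn p p' (Set.Iio i)) (ha : Set.EqOn a a' (Set.Iio i)) :
    touchers p a i κ = touchers p' a' i κ :=
  (touchers_subset hp ha).antisymm (touchers_subset hp.symm ha.symm)

lemma linePos_congr (hp : Set.EqOn p p' (Set.Iio i)) (ha : Set.EqOn a a' (Set.Iio i)) :
    linePos p a i = linePos p' a' i := by
  ext κ
  rw [linePos, linePos, touchers_congr hp ha]
  congr 1
  refine Set.image_congr fun j hj => ?_
  rw [proposal, proposal, radius_congr (hp hj.1) (ha hj.1), hp hj.1]

lemma lines_congr (hp : Set.EqOn p p' (Set.Iic i)) (ha : Set.EqOn a a' (Set.Iio i)) :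
    lines p a i = lines p' a' i := by
  have hp' := hp.mono Set.Iio_subset_Iic_self
  simp only [lines, live, phase_congr hp, hp Set.self_mem_Iic, touchers_congr hp' ha,
    linePos_congr hp' ha]

lemma anchor_eq (p : ℕ → Pt) (i : ℕ) :
    anchor p i = sSup (lines p (anchor p) i ∩ Set.Iic (p i).1) := by
  rw [anchor, lines_congr (Set.eqOn_refl p _) fun j (hj : j < i) => if_pos hj]

lemma anchor_congr (hp : Set.EqOn p p' (Set.Iic i)) : anchor p i = anchor p' i := by
  induction i using Nat.strong_induction_on with
  | _ i ih =>
    rw [anchor_eq, anchor_eq, hp Set.self_mem_Iic,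
      lines_congr hp fun j hj => ih j hj (hp.mono (Set.Iic_subset_Iic.2 (le_of_lt hj)))]

lemma height_congr (hp : Set.EqOn p p' (Set.Iio i)) : height p i = height p' i := by
  cases i with
  | zero => rfl
  | succ i => exact congrArg Prod.snd (hp i.lt_succ_self)

lemma stroke_congr (hp : Set.EqOn p p' (Set.Iic i)) (ha : Set.EqOn a a' (Set.Iic i)) :
    stroke p a i = stroke p' a' i := by
  have hsucc : height p (i + 1) = height p' (i + 1) :=
    height_congr (hp.mono fun _ hj => Nat.lt_succ_iff.1 hj)
  simp only [stroke, hsucc, height_congr (hp.mono Set.Iio_subset_Iic_self), hp Set.self_mem_Iic,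
    ha Set.self_mem_Iic, lines_congr hp (ha.mono Set.Iio_subset_Iic_self)]

lemma stroke_anchor_congr (hp : Set.EqOn p p' (Set.Iic i)) :
    stroke p (anchor p) i = stroke p' (anchor p') i :=
  stroke_congr hp fun _ hj => anchor_congr (hp.mono (Set.Iic_subset_Iic.2 hj))

end Congr

lemma isRun_anchor {p : ℕ → Pt} (h₀ : ∀ i, 0 ≤ p i) (hm : Monotone fun i => (p i).2) :
    IsRun p (anchor p) where
  nonneg := h₀
  monotone_snd := hm
  isGreatest i := by
    have hfin := (finite_lines p (anchor p) i).inter_of_left (Set.Iic (p i).1)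
    rw [anchor_eq]
    exact ⟨Set.Nonempty.csSup_mem ⟨0, Set.mem_insert _ _, (h₀ i).1⟩ hfin,
      fun _ hc => le_csSup hfin.bddAbove hc⟩

section Run

variable {p : ℕ → Pt} {a : ℕ → ℝ} {i j n : ℕ} {c : ℝ} {κ : Cell}

namespace IsRun

lemma height_le_succ (h : IsRun p a) (i : ℕ) : height p i ≤ height p (i + 1) := by
  cases i with
  | zero => exact (h.nonneg 0).2
  | succ i => exact h.monotone_snd i.le_succ

lemma monotone_height (h : IsRun p a) : Monotone (height p) :=
  monotone_nat_of_le_succ h.height_le_succ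

lemma height_nonneg (h : IsRun p a) (i : ℕ) : 0 ≤ height p i := h.monotone_height i.zero_le

lemma anchor_nonneg (h : IsRun p a) (i : ℕ) : 0 ≤ a i := nonneg_of_mem_lines (h.isGreatest i).1.1

lemma anchor_le (h : IsRun p a) (i : ℕ) : a i ≤ (p i).1 := (h.isGreatest i).1.2

lemma radius_nonneg (h : IsRun p a) (i : ℕ) : 0 ≤ radius p a i :=
  div_nonneg (sub_nonneg.2 (h.anchor_le i)) (mul_pos two_pos (branching_pos _)).le

end IsRun

lemma two_mul_branching_mul_radius (p : ℕ → Pt) (a : ℕ → ℝ) (i : ℕ) :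
    2 * branching (epoch i) * radius p a i = (p i).1 - a i :=
  mul_div_cancel₀ _ (mul_pos two_pos (branching_pos _)).ne'

lemma IsRun.radius_le (h : IsRun p a) (i : ℕ) : radius p a i ≤ (p i).1 - a i := by
  rw [← two_mul_branching_mul_radius]
  exact le_mul_of_one_le_left (h.radius_nonneg i) (by linarith [two_le_branching (epoch i)])

lemma IsRun.anchor_le_proposal (h : IsRun p a) (κ : Cell) (j : ℕ) : a j ≤ proposal p a κ j :=
  (le_sub_comm.1 (h.radius_le j)).trans (le_max_left _ _)

lemma IsRun.proposal_le (h : IsRun p a) (hj : Touches p a j κ) : proposal p a κ j ≤ (p j).1 :=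
  max_le (sub_le_self _ (h.radius_nonneg j)) hj.col_mul_le

lemma drawing_succ (p : ℕ → Pt) (a : ℕ → ℝ) (n : ℕ) :
    drawing p a (n + 1) = stroke p a n ∪ drawing p a n := by
  rw [drawing, Finset.range_add_one, Finset.set_biUnion_insert, drawing]

lemma monotone_drawing (p : ℕ → Pt) (a : ℕ → ℝ) : Monotone (drawing p a) := fun _ _ h =>
  Set.biUnion_subset_biUnion_left (Finset.range_subset_range.2 h)

lemma stroke_subset_drawing (p : ℕ → Pt) (a : ℕ → ℝ) (i : ℕ) :
    stroke p a i ⊆ drawing p a (i + 1) :=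
  Set.subset_biUnion_of_mem (u := fun i => stroke p a i) (Finset.self_mem_range_succ i)

lemma segment_subset_stroke (hc : c ∈ lines p a i) :
    segment ℝ (c, height p i) (c, height p (i + 1)) ⊆ stroke p a i :=
  (Set.subset_biUnion_of_mem (u := fun c => segment ℝ (c, height p i) (c, height p (i + 1)))
    hc).trans Set.subset_union_right

lemma IsRun.isRectilinearUnion_stroke (h : IsRun p a) (i : ℕ) :
    IsRectilinearUnion (stroke p a i) := by
  have hh := h.height_nonneg
  refine .union (.of_axisSeg ?_) (.biUnion (finite_lines p a i) fun c hc => .of_axisSeg ?_)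
  · exact ⟨.inr rfl, h.anchor_nonneg i, (h.nonneg i).2, (h.nonneg i).1, (h.nonneg i).2⟩
  · have hc₀ := nonneg_of_mem_lines hc
    exact ⟨.inl rfl, hc₀, hh i, hc₀, hh (i + 1)⟩

lemma IsRun.isRectilinearUnion_drawing (h : IsRun p a) (n : ℕ) :
    IsRectilinearUnion (drawing p a n) :=
  .biUnion (Finset.range n).finite_toSet fun i _ => h.isRectilinearUnion_stroke i

lemma IsRun.height_le_of_mem_stroke (h : IsRun p a) {q : Pt} (hq : q ∈ stroke p a i) :
    height p i ≤ q.2 := by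
  have hconv : Convex ℝ {q : Pt | height p i ≤ q.2} := (convex_Ici _).linear_preimage (.snd ℝ ℝ ℝ)
  have hi := h.height_le_succ i
  refine (?_ : stroke p a i ⊆ {q : Pt | height p i ≤ q.2}) hq
  exact Set.union_subset (hconv.segment_subset hi hi)
    (Set.iUnion₂_subset fun _ _ => hconv.segment_subset (le_refl (height p i)) hi)

-- A cell that is live now was live ever since it was first touched, so its line has been extended
-- without a gap since the toucher that determines its position.
lemma IsRun.exists_toucher_of_mem_live (h : IsRun p a) (hκ : κ ∈ live p a i) :
    ∃ j < i, Touches p a j κ ∧ ∀ i' ∈ Set.Ioc j i, κ ∈ live p a i' ∧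
      linePos p a i' κ = proposal p a κ j := by
  obtain ⟨j, ⟨hji, hj⟩, hij⟩ := (isLeast_linePos hκ.2.2).1
  refine ⟨j, hji, hj, fun i' hi' => ?_⟩
  have hjne : (touchers p a i' κ).Nonempty := ⟨j, hi'.1, hj⟩
  refine ⟨⟨?_, (h.monotone_snd hi'.2).trans hκ.2.1, hjne⟩, le_antisymm ?_ ?_⟩
  · refine le_antisymm ?_ ?_
    · exact hj.phase_eq ▸ phase_le_phase hj.fst_pos le_rfl hi'.1.le
    · exact hκ.1 ▸ phase_le_phase hj.fst_pos hi'.1.le hi'.2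
  · exact (isLeast_linePos hjne).2 ⟨j, ⟨hi'.1, hj⟩, rfl⟩
  · obtain ⟨j', ⟨hj'i, hj'⟩, hij'⟩ := (isLeast_linePos hjne).1
    rw [← hij', hij]
    exact (isLeast_linePos hκ.2.2).2 ⟨j', ⟨hj'i.trans_le hi'.2, hj'⟩, rfl⟩

lemma IsRun.monPathTo_of_forall_mem_lines (h : IsRun p a) (hji : j ≤ i)
    (hj : MonPathTo (drawing p a (j + 1)) (c, (p j).2))
    (hc : ∀ i' ∈ Set.Ioc j i, c ∈ lines p a i') :
    MonPathTo (drawing p a (i + 1)) (c, (p i).2) := by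
  induction i, hji using Nat.le_induction with
  | base => exact hj
  | succ i hji ih =>
    have hpath := ih fun i' hi' => hc i' ⟨hi'.1, hi'.2.trans i.le_succ⟩
    refine (hpath.mono (monotone_drawing p a i.succ.le_succ)).extend ?_ ⟨le_rfl, ?_⟩
    · exact (segment_subset_stroke (hc _ ⟨Nat.lt_succ_of_le hji, le_rfl⟩)).trans
        (stroke_subset_drawing p a _)
    · exact h.monotone_snd i.le_succ

lemma IsRun.monPathTo_axis (h : IsRun p a) (i : ℕ) :
    MonPathTo (drawing p a (i + 1)) (0, (p i).2) := by
  refine h.monPathTo_of_forall_mem_lines i.zero_le ?_ fun _ _ => Set.mem_insert _ _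
  have hseg : segment ℝ 0 (0, (p 0).2) ⊆ drawing p a 1 :=
    (segment_subset_stroke (Set.mem_insert _ _)).trans (stroke_subset_drawing p a 0)
  exact (MonPathTo.zero (hseg (left_mem_segment _ _ _))).extend hseg ⟨le_rfl, (h.nonneg 0).2⟩

lemma IsRun.monPathTo_connection (h : IsRun p a) (i : ℕ) {u : ℝ} (hu : u ∈ Set.Icc (a i) (p i).1) :
    MonPathTo (drawing p a (i + 1)) (u, (p i).2) := by
  induction i using Nat.strong_induction_on generalizing u with
  | _ i ih =>
    have hanchor : MonPathTo (drawing p a (i + 1)) (a i, (p i).2) := by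
      obtain h₀ | ⟨κ, hκ, hpos⟩ := (h.isGreatest i).1.1
      · exact h₀ ▸ h.monPathTo_axis i
      · obtain ⟨j, hji, hj, hlive⟩ := h.exists_toucher_of_mem_live hκ
        rw [← hpos, (hlive i ⟨hji, le_rfl⟩).2]
        refine h.monPathTo_of_forall_mem_lines hji.le
          (ih j hji ⟨h.anchor_le_proposal κ j, h.proposal_le hj⟩) fun i' hi' => ?_
        exact .inr ⟨κ, hlive i' hi'⟩
    exact hanchor.extend ((segment_subset_segment_right_of_fst_le hu.1 hu.2).trans
      (Set.subset_union_left.trans (stroke_subset_drawing p a i))) ⟨hu.1, le_rfl⟩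

end Run

section Requests

variable {Q : List Pt} {i : ℕ}

lemma requests_of_lt (hi : i < Q.length) : requests Q i = Q[i] := by
  rw [requests, min_eq_left (by lia), List.getD_eq_getElem _ _ hi]

lemma requests_append (P : List Pt) (hi : i < Q.length) : requests (Q ++ P) i = requests Q i := by
  rw [requests_of_lt hi, requests_of_lt (by simp; lia), List.getElem_append_left hi]

lemma requests_mem (hQ : Q ≠ []) (i : ℕ) : requests Q i ∈ Q := by
  have := List.length_pos_iff.2 hQ
  rw [requests, List.getD_eq_getElem _ _ (by lia)]
  exact List.getElem_mem _

lemma requests_nonneg (h : ValidRSA Q) (i : ℕ) : 0 ≤ requests Q i := by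
  rcases eq_or_ne Q [] with rfl | hQ
  · exact le_rfl
  · exact h.1 _ (requests_mem hQ i)

lemma monotone_requests_snd (h : ValidRSA Q) : Monotone fun i => (requests Q i).2 := by
  refine monotone_nat_of_le_succ fun i => ?_
  rcases lt_or_ge (i + 1) Q.length with hi | hi
  · rw [requests_of_lt hi, requests_of_lt (i.lt_succ_self.trans hi)]
    exact List.isChain_iff_getElem.1 h.2 i hi
  · rw [requests, requests, min_eq_right (by lia), min_eq_right (by lia)]

lemma isRun_requests (h : ValidRSA Q) : IsRun (requests Q) (anchor (requests Q)) :=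
  isRun_anchor (requests_nonneg h) (monotone_requests_snd h)

lemma height_requests_length (Q : List Pt) (q : Pt) :
    height (requests (Q ++ [q])) Q.length = lastY Q := by
  rcases Q.eq_nil_or_concat with rfl | ⟨Q, r, rfl⟩ <;> simp [lastY, height, requests]

lemma feasibleRSA_gridAlgorithm (h : ValidRSA Q) : FeasibleRSA Q (gridAlgorithm Q) := by
  have hrun := isRun_requests h
  refine ⟨hrun.isRectilinearUnion_drawing _, fun q hq => ?_⟩
  obtain ⟨i, hi, rfl⟩ := List.getElem_of_mem hq
  rw [← requests_of_lt hi]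
  exact (hrun.monPathTo_connection i ⟨hrun.anchor_le i, le_rfl⟩).mono (monotone_drawing _ _ hi)

lemma gridAlgorithm_append_singleton (Q : List Pt) (q : Pt) :
    gridAlgorithm (Q ++ [q]) =
      stroke (requests (Q ++ [q])) (anchor (requests (Q ++ [q]))) Q.length ∪ gridAlgorithm Q := by
  rw [gridAlgorithm, List.length_append, List.length_singleton, drawing_succ]
  congr 1
  refine Set.iUnion₂_congr fun i hi => stroke_anchor_congr fun j hj => requests_append _ ?_
  exact lt_of_le_of_lt hj (Finset.mem_range.1 hi)

lemma onlineRSA_gridAlgorithm : OnlineRSA gridAlgorithm := by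
  refine ⟨fun Q h => feasibleRSA_gridAlgorithm h, fun Q q h => ?_⟩
  rw [gridAlgorithm_append_singleton]
  refine ⟨Set.subset_union_right, ?_⟩
  rintro z ⟨hz | hz, hzQ⟩
  · exact height_requests_length Q q ▸ (isRun_requests h).height_le_of_mem_stroke hz
  · exact absurd hz hzQ

end Requests

/-! ### The horizontal cost -/

/-- `S` has finite length and connects all the requests `p i` to the origin. -/
structure Serves (S : Set Pt) (p : ℕ → Pt) : Prop where
  ne_top : μH[1] S ≠ ∞
  monPathTo : ∀ i, MonPathTo S (p i)

namespace Serves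

variable {S : Set Pt} {p : ℕ → Pt} {i : ℕ}

lemma fst_le (h : Serves S p) (i : ℕ) : (p i).1 ≤ μH[1].real S :=
  (le_abs_self _).trans ((norm_fst_le _).trans (norm_le_of_monPathTo h.ne_top (h.monPathTo i)))

lemma snd_le (h : Serves S p) (i : ℕ) : (p i).2 ≤ μH[1].real S :=
  (le_abs_self _).trans ((norm_snd_le _).trans (norm_le_of_monPathTo h.ne_top (h.monPathTo i)))

lemma two_zpow_width_le (h : Serves S p) (hi : 0 < (p i).1) :
    (2 : ℝ) ^ width p i ≤ 2 * μH[1].real S := by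
  have hpos := hi.trans_le (le_partialSups (fun j => (p j).1) i)
  calc (2 : ℝ) ^ width p i = 2 * 2 ^ (width p i - 1) := by
        rw [zpow_sub_one₀ two_ne_zero]; ring
    _ ≤ 2 * partialSups (fun j => (p j).1) i := by
        have := Int.zpow_pred_clog_lt_self one_lt_two hpos
        gcongr
        exact_mod_cast this.le
    _ ≤ 2 * μH[1].real S := by
        gcongr
        exact partialSups_le _ _ _ fun j _ => h.fst_le j

end Serves

section Packing

variable {ι : Type*} {S : Set Pt} {p : ℕ → Pt} {s : Finset ι} {idx : ι → ℕ} {ρ : ι → ℝ} {i j : ℕ}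

lemma lt_of_width_lt (hj : 0 < (p j).1) (h : width p i < width p j) : i < j :=
  lt_of_not_ge fun hji => (width_le_width hj le_rfl hji).not_gt h

lemma disjoint_box_of_snd_le {q q' : Pt} {ρ ρ' : ℝ} (h : q.2 ≤ q'.2 - ρ') :
    Disjoint (box q ρ) (box q' ρ') :=
  Set.disjoint_left.2 fun _ hz hz' => (hz.2.2.trans h).not_gt hz'.2.1

/-- The box of side `ρ b` at the request `idx b` reaches strictly below a request of the family `s`
that has smaller width. -/
def Crosses (p : ℕ → Pt) (s : Finset ι) (idx : ι → ℕ) (ρ : ι → ℝ) (b : ι) : Prop :=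
  ∃ c ∈ s, width p (idx c) < width p (idx b) ∧ (p (idx b)).2 - ρ b < (p (idx c)).2

lemma sum_le_of_not_crosses (hS : Serves S p)
    (hρ : ∀ b ∈ s, ρ b ≤ (p (idx b)).1) (hs : ∀ b ∈ s, ¬ Crosses p s idx ρ b)
    (hd : ∀ b ∈ s, ∀ c ∈ s, b ≠ c → width p (idx b) = width p (idx c) →
      Disjoint (box (p (idx b)) (ρ b)) (box (p (idx c)) (ρ c))) :
    ∑ b ∈ s, ρ b ≤ μH[1].real S := by
  refine sum_le_of_pairwiseDisjoint_box hS.ne_top (fun b _ => hS.monPathTo (idx b))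
    (fun b hb => (hρ b hb).trans ((le_abs_self _).trans (norm_fst_le (p (idx b))))) ?_
  intro b hb c hc hbc
  rcases lt_trichotomy (width p (idx b)) (width p (idx c)) with hw | hw | hw
  · exact disjoint_box_of_snd_le (not_lt.1 fun hlt => hs c hc ⟨b, hb, hw, hlt⟩)
  · exact hd b hb c hc hbc hw
  · exact (disjoint_box_of_snd_le (not_lt.1 fun hlt => hs b hb ⟨c, hc, hw, hlt⟩)).symm

-- Two crossing boxes of equal width meet a common horizontal line: the one through the higher of
-- the two requests below which they reach.
lemma disjoint_Ioc_of_crosses (hm : Monotone fun i => (p i).2) {b c : ι}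
    (hb₀ : 0 < (p (idx b)).1) (hc₀ : 0 < (p (idx c)).1)
    (hb : Crosses p s idx ρ b) (hc : Crosses p s idx ρ c) (hw : width p (idx b) = width p (idx c))
    (hd : Disjoint (box (p (idx b)) (ρ b)) (box (p (idx c)) (ρ c))) :
    Disjoint (Set.Ioc ((p (idx b)).1 - ρ b) (p (idx b)).1)
      (Set.Ioc ((p (idx c)).1 - ρ c) (p (idx c)).1) := by
  obtain ⟨b', -, hwb, hb'⟩ := hb
  obtain ⟨c', -, hwc, hc'⟩ := hc
  have hle {d : ι} (hd₀ : 0 < (p (idx d)).1) (hwb : width p (idx b') < width p (idx d))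
      (hwc : width p (idx c') < width p (idx d)) :
      max (p (idx b')).2 (p (idx c')).2 ≤ (p (idx d)).2 :=
    max_le (hm (lt_of_width_lt hd₀ hwb).le) (hm (lt_of_width_lt hd₀ hwc).le)
  refine Set.disjoint_left.2 fun u hub huc => (Set.disjoint_left.1 hd)
    (a := (u, max (p (idx b')).2 (p (idx c')).2)) ⟨hub, ?_, ?_⟩ ⟨huc, ?_, ?_⟩
  · exact lt_max_of_lt_left hb'
  · exact hle hb₀ hwb (hw ▸ hwc)
  · exact lt_max_of_lt_right hc'
  · exact hle hc₀ (hw ▸ hwb) hwc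

lemma sum_le_of_crosses (hm : Monotone fun i => (p i).2) (hS : Serves S p)
    (hρ : ∀ b ∈ s, 0 < ρ b ∧ ρ b ≤ (p (idx b)).1) {t : Finset ι} (hts : t ⊆ s)
    (ht : ∀ b ∈ t, Crosses p s idx ρ b)
    (hd : ∀ b ∈ s, ∀ c ∈ s, b ≠ c → width p (idx b) = width p (idx c) →
      Disjoint (box (p (idx b)) (ρ b)) (box (p (idx c)) (ρ c))) :
    ∑ b ∈ t, ρ b ≤ 4 * μH[1].real S := by
  have hpos : ∀ b ∈ t, 0 < (p (idx b)).1 := fun b hb =>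
    (hρ b (hts hb)).1.trans_le (hρ b (hts hb)).2
  rcases t.eq_empty_or_nonempty with rfl | hne
  · simp
  obtain ⟨b₀, hb₀, hmax⟩ := t.exists_max_image (fun b => width p (idx b)) hne
  rw [← Finset.sum_fiberwise_of_maps_to (g := fun b => width p (idx b))
    fun b hb => Finset.mem_image_of_mem (fun b => width p (idx b)) hb]
  calc _ ≤ ∑ w ∈ t.image fun b => width p (idx b), (2 : ℝ) ^ w := by
        refine Finset.sum_le_sum fun w _ => ?_
        have := sum_sub_le_of_pairwiseDisjoint_Ioc (s := {b ∈ t | width p (idx b) = w})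
          (l := fun b => (p (idx b)).1 - ρ b) (r := fun b => (p (idx b)).1)
          (show (0 : ℝ) ≤ 2 ^ w by positivity) ?_ ?_
        · simpa using this
        · intro b hbw
          obtain ⟨hb, rfl⟩ := Finset.mem_filter.1 hbw
          exact Set.Ioc_subset_Ioc (sub_nonneg.2 (hρ b (hts hb)).2) (fst_le_two_zpow_width p _)
        · intro b hbw c hcw hbc
          obtain ⟨hb, rfl⟩ := Finset.mem_filter.1 hbw
          obtain ⟨hc, hw⟩ := Finset.mem_filter.1 hcw
          exact disjoint_Ioc_of_crosses hm (hpos b hb) (hpos c hc) (ht b hb) (ht c hc) hw.symm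
            (hd b (hts hb) c (hts hc) hbc hw.symm)
    _ ≤ 2 ^ (width p (idx b₀) + 1) := sum_two_zpow_le (Finset.forall_mem_image.2 hmax)
    _ ≤ 4 * μH[1].real S := by
        rw [zpow_add_one₀ two_ne_zero]
        linarith [hS.two_zpow_width_le (hpos b₀ hb₀)]

lemma sum_le_of_disjoint_box_of_width_eq (hm : Monotone fun i => (p i).2) (hS : Serves S p)
    (hρ : ∀ b ∈ s, 0 < ρ b ∧ ρ b ≤ (p (idx b)).1)
    (hd : ∀ b ∈ s, ∀ c ∈ s, b ≠ c → width p (idx b) = width p (idx c) →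
      Disjoint (box (p (idx b)) (ρ b)) (box (p (idx c)) (ρ c))) :
    ∑ b ∈ s, ρ b ≤ 5 * μH[1].real S := by
  classical
  have hcross := sum_le_of_crosses hm hS hρ (s.filter_subset (Crosses p s idx ρ))
    (fun b hb => (Finset.mem_filter.1 hb).2) hd
  have hrest : ∑ b ∈ s with ¬ Crosses p s idx ρ b, ρ b ≤ μH[1].real S := by
    have hsub := s.filter_subset fun b => ¬ Crosses p s idx ρ b
    refine sum_le_of_not_crosses hS (fun b hb => (hρ b (hsub hb)).2) ?_
      fun b hb c hc => hd b (hsub hb) c (hsub hc)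
    rintro b hb ⟨c, hc, hbc⟩
    exact (Finset.mem_filter.1 hb).2 ⟨c, hsub hc, hbc⟩
  rw [← Finset.sum_filter_add_sum_filter_not s (Crosses p s idx ρ)]
  linarith

end Packing

section Horizontal

variable {S : Set Pt} {p : ℕ → Pt} {a : ℕ → ℝ} {i j : ℕ}

lemma sideLength_zero (φ : ℕ × ℤ) : sideLength φ 0 = 2 ^ φ.2 := by simp [sideLength]

lemma branching_mul_sideLength_succ (φ : ℕ × ℤ) (k : ℕ) :
    branching φ.1 * sideLength φ (k + 1) = sideLength φ k := by
  have := branching_pos φ.1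
  rw [sideLength, sideLength, pow_succ]
  field_simp

lemma two_pow_two_pow_le_branching_pow_depth (e : ℕ) :
    (2 : ℝ) ^ 2 ^ e ≤ (branching e : ℝ) ^ depth e := by
  have : 2 ^ e ≤ (e / 2 + 1) * depth e := (Nat.lt_mul_div_succ _ (Nat.succ_pos _)).le
  rw [branching]
  push_cast
  rw [← pow_mul]
  exact pow_le_pow_right₀ one_le_two this

lemma IsRun.radius_le_fst (h : IsRun p a) (i : ℕ) : radius p a i ≤ (p i).1 :=
  (h.radius_le i).trans (sub_le_self _ (h.anchor_nonneg i))

/-- The radius of request `i` exceeds the side length at the finest level. -/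
def IsBig (p : ℕ → Pt) (a : ℕ → ℝ) (i : ℕ) : Prop :=
  sideLength (phase p i) (depth (epoch i)) < radius p a i

lemma IsRun.exists_level_of_isBig (h : IsRun p a) (hi : IsBig p a i) :
    ∃ l ≤ depth (epoch i), radius p a i ≤ sideLength (phase p i) l ∧
      sideLength (phase p i) l < branching (epoch i) * radius p a i := by
  classical
  have hex : ∃ k, sideLength (phase p i) k < radius p a i := ⟨_, hi⟩
  have hlt := Nat.find_spec hex
  have hle : Nat.find hex ≤ depth (epoch i) := Nat.find_min' hex hi
  obtain ⟨l, hl⟩ : ∃ l, Nat.find hex = l + 1 := by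
    refine Nat.exists_eq_succ_of_ne_zero fun h₀ => ?_
    rw [h₀, sideLength_zero] at hlt
    exact ((h.radius_le_fst i).trans (fst_le_two_zpow_width p i)).not_gt hlt
  refine ⟨l, by lia, not_lt.1 (Nat.find_min hex (by lia)), ?_⟩
  rw [hl] at hlt
  rw [← branching_mul_sideLength_succ]
  exact mul_lt_mul_of_pos_left hlt (branching_pos _)

lemma exists_nat_mul_le_lt {z δ : ℝ} (hδ : 0 < δ) (hz : 0 ≤ z) :
    ∃ m : ℕ, m * δ ≤ z ∧ z < (m + 1) * δ :=
  ⟨⌊z / δ⌋₊, (le_div_iff₀ hδ).1 (Nat.floor_le (div_nonneg hz hδ.le)),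
    (div_lt_iff₀ hδ).1 (Nat.lt_floor_add_one _)⟩

-- The line belongs to the cell of the given level at height `(p i).2` whose columns contain `u`.
lemma IsRun.exists_mem_lines_near (h : IsRun p a) (hij : i < j) (hφ : phase p i = phase p j) {l : ℕ}
    (hl : l ≤ depth (phase p j).1) (hy : (p j).2 ≤ (p i).2 + sideLength (phase p j) l) {u : ℝ}
    (hu₀ : 0 ≤ u) (hu : u ∈ Set.Ioc ((p i).1 - radius p a i) (p i).1) :
    ∃ c ∈ lines p a j, c ≤ u ∧ u ≤ c + sideLength (phase p j) l := by
  have hδ := sideLength_pos (phase p j) l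
  obtain ⟨m, hmu, hum⟩ := exists_nat_mul_le_lt hδ hu₀
  obtain ⟨n, hny, hyn⟩ := exists_nat_mul_le_lt hδ (h.nonneg i).2
  rcases m.eq_zero_or_pos with rfl | hm
  · exact ⟨0, Set.mem_insert _ _, hu₀, by simpa using hum.le⟩
  · let κ : Cell := ⟨phase p j, l, m, n⟩
    have htouch : Touches p a i κ :=
      ⟨hφ.symm, hl, hm, hny, hyn, hmu.trans hu.2, hu.1.trans hum⟩
    have hne : (touchers p a j κ).Nonempty := ⟨i, hij, htouch⟩
    have hlive : κ ∈ live p a j := by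
      refine ⟨rfl, hy.trans ?_, hne⟩
      change _ ≤ ((n : ℝ) + 2) * sideLength (phase p j) l
      linarith
    refine ⟨linePos p a j κ, .inr ⟨κ, hlive, rfl⟩, ?_, ?_⟩
    · exact ((isLeast_linePos hne).2 ⟨i, ⟨hij, htouch⟩, rfl⟩).trans (max_le hu.1.le hmu)
    · have : m * sideLength (phase p j) l ≤ linePos p a j κ := col_mul_side_le_linePos hne
      linarith

-- If the boxes met, the earlier request would have left behind a line closer to the later one than
-- its anchor.
lemma IsRun.disjoint_box_of_isBig (h : IsRun p a) (hij : i < j) (hφ : phase p i = phase p j)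
    (hj : IsBig p a j) : Disjoint (box (p i) (radius p a i)) (box (p j) (radius p a j)) := by
  refine Set.disjoint_left.2 ?_
  rintro ⟨u, y⟩ ⟨hui, -, hyi⟩ ⟨huj, hyj, -⟩
  obtain ⟨l, hl, hrl, hlr⟩ := h.exists_level_of_isBig hj
  have hu₀ : 0 ≤ u := (sub_nonneg.2 (h.radius_le_fst i)).trans hui.1.le
  obtain ⟨c, hc, hcu, huc⟩ := h.exists_mem_lines_near hij hφ hl (by linarith) hu₀ hui
  have hanchor : c ≤ a j := (h.isGreatest j).2 ⟨hc, hcu.trans huj.2⟩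
  have hD := two_mul_branching_mul_radius p a j
  have hr : 2 * radius p a j ≤ branching (epoch j) * radius p a j :=
    mul_le_mul_of_nonneg_right (two_le_branching _) (h.radius_nonneg j)
  linarith [hr, huj.1, h.radius_nonneg j]

open Classical in
lemma IsRun.sum_radius_isBig_le (h : IsRun p a) (hS : Serves S p) (n e : ℕ) :
    ∑ i ∈ Finset.range n with epoch i = e ∧ IsBig p a i, radius p a i ≤ 5 * μH[1].real S := by
  refine sum_le_of_disjoint_box_of_width_eq (idx := id) h.monotone_snd hS (fun i hi => ?_) ?_
  · exact ⟨(sideLength_pos _ _).trans (Finset.mem_filter.1 hi).2.2, h.radius_le_fst i⟩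
  · intro i hi j hj hij hw
    obtain ⟨hei, hbi⟩ := (Finset.mem_filter.1 hi).2
    obtain ⟨hej, hbj⟩ := (Finset.mem_filter.1 hj).2
    have hφ : phase p i = phase p j := Prod.ext (hei.trans hej.symm) hw
    rcases hij.lt_or_gt with hij | hij
    · exact h.disjoint_box_of_isBig hij hφ hbj
    · exact (h.disjoint_box_of_isBig hij hφ.symm hbi).symm

lemma IsRun.radius_le_of_not_isBig (h : IsRun p a) (hS : Serves S p) (hi : ¬ IsBig p a i) :
    radius p a i ≤ 2 * μH[1].real S / 2 ^ 2 ^ epoch i := by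
  rcases (h.nonneg i).1.eq_or_lt with hx | hx
  · exact (h.radius_le_fst i).trans (hx.symm.le.trans (by positivity))
  · calc radius p a i ≤ 2 ^ width p i / (branching (epoch i) : ℝ) ^ depth (epoch i) := not_lt.1 hi
      _ ≤ 2 * μH[1].real S / 2 ^ 2 ^ epoch i :=
        div_le_div₀ (by positivity) (hS.two_zpow_width_le hx) (by positivity)
          (two_pow_two_pow_le_branching_pow_depth _)

lemma card_filter_epoch_eq_le (n e : ℕ) : {i ∈ Finset.range n | epoch i = e}.card ≤ 2 ^ 2 ^ e := by
  rw [← Finset.card_range (2 ^ 2 ^ e)]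
  exact Finset.card_le_card fun i hi =>
    Finset.mem_range.2 (epoch_le_iff.1 (Finset.mem_filter.1 hi).2.le)

lemma IsRun.sum_sub_anchor_le (h : IsRun p a) (hS : Serves S p) (n e : ℕ) :
    ∑ i ∈ Finset.range n with epoch i = e, ((p i).1 - a i) ≤
      14 * branching e * μH[1].real S := by
  classical
  have hbig := h.sum_radius_isBig_le hS n e
  have hsmall : ∑ i ∈ Finset.range n with epoch i = e ∧ ¬ IsBig p a i, radius p a i ≤
      2 * μH[1].real S :=
    calc _ ≤ {i ∈ Finset.range n | epoch i = e ∧ ¬ IsBig p a i}.card •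
          (2 * μH[1].real S / 2 ^ 2 ^ e) := by
          refine Finset.sum_le_card_nsmul _ _ _ fun i hi => ?_
          obtain ⟨-, rfl, hsmall⟩ := Finset.mem_filter.1 hi
          exact h.radius_le_of_not_isBig hS hsmall
      _ ≤ 2 ^ 2 ^ e * (2 * μH[1].real S / 2 ^ 2 ^ e) := by
          rw [nsmul_eq_mul]
          gcongr
          rw [← Finset.filter_filter]
          exact_mod_cast (Finset.card_filter_le _ _).trans (card_filter_epoch_eq_le n e)
      _ = 2 * μH[1].real S := by field_simp
  calc ∑ i ∈ Finset.range n with epoch i = e, ((p i).1 - a i)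
      = ∑ i ∈ Finset.range n with epoch i = e, 2 * branching e * radius p a i := by
        refine Finset.sum_congr rfl fun i hi => ?_
        rw [← (Finset.mem_filter.1 hi).2, two_mul_branching_mul_radius]
    _ = 2 * branching e * ∑ i ∈ Finset.range n with epoch i = e, radius p a i :=
        (Finset.mul_sum _ _ _).symm
    _ ≤ 2 * branching e * (5 * μH[1].real S + 2 * μH[1].real S) := by
        rw [← Finset.sum_filter_add_sum_filter_not _ (IsBig p a), Finset.filter_filter,
          Finset.filter_filter]
        gcongr
    _ = 14 * branching e * μH[1].real S := by ring

end Horizontal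

/-! ### The vertical cost -/

/-- The cells touched by the first `n` requests. -/
noncomputable def touchedCells (p : ℕ → Pt) (a : ℕ → ℝ) (n : ℕ) : Finset Cell :=
  (finite_setOf_nonempty_touchers p a n).toFinset

section Vertical

variable {S : Set Pt} {p : ℕ → Pt} {a : ℕ → ℝ} {i j n : ℕ} {κ κ' : Cell} {s : Finset Cell}

lemma mem_touchedCells : κ ∈ touchedCells p a n ↔ ∃ j < n, Touches p a j κ := by
  simp [touchedCells, touchers, Set.Nonempty]

open Classical in
lemma IsRun.sum_height_sub_live_le (h : IsRun p a) (n : ℕ) (κ : Cell) :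
    ∑ i ∈ Finset.range n with κ ∈ live p a i, (height p (i + 1) - height p i) ≤ 2 * κ.side := by
  have hκ := κ.side_pos
  have hsum := sum_sub_le_of_pairwiseDisjoint_Ioc (s := {i ∈ Finset.range n | κ ∈ live p a i})
    (l := height p) (r := fun i => height p (i + 1)) (c := κ.row * κ.side)
    (d := (κ.row + 2) * κ.side) (by linarith) ?_
    (h.monotone_height.pairwise_disjoint_on_Ioc_succ.set_pairwise _)
  · linarith
  · intro i hi
    obtain ⟨-, hle, j, hji, hj⟩ := (Finset.mem_filter.1 hi).2
    exact Set.Ioc_subset_Ioc (hj.row_mul_le.trans (h.monotone_height hji)) hle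

lemma eq_of_modEq_of_mul_lt {m n c : ℕ} {δ : ℝ} (hδ : 0 ≤ δ) (hmod : m ≡ n [MOD c])
    (h : m * δ < (n + c) * δ) (h' : n * δ < (m + c) * δ) : m = n := by
  have hm : m < n + c := by exact_mod_cast lt_of_mul_lt_mul_right h hδ
  have hn : n < m + c := by exact_mod_cast lt_of_mul_lt_mul_right h' hδ
  exact hmod.eq_of_abs_lt (abs_sub_lt_iff.2 ⟨by lia, by lia⟩)

lemma Cell.side_eq_side (hφ : κ.phase = κ'.phase) (hl : κ.level = κ'.level) :
    κ.side = κ'.side := by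
  rw [Cell.side, Cell.side, hφ, hl]

lemma IsRun.sum_side_le_three_mul_radius (h : IsRun p a) {k : ℕ}
    (hs : ∀ κ ∈ s, κ.level = k ∧ Touches p a j κ ∧ κ.side < radius p a j) :
    ∑ κ ∈ s, κ.side ≤ 3 * radius p a j := by
  have hr := h.radius_nonneg j
  have hsum := sum_sub_le_of_pairwiseDisjoint_Ioc (s := s) (l := fun κ => κ.col * κ.side)
    (r := fun κ => (κ.col + 1) * κ.side) (c := (p j).1 - 2 * radius p a j)
    (d := (p j).1 + radius p a j) (by linarith) ?_ ?_
  · calc ∑ κ ∈ s, κ.side = ∑ κ ∈ s, ((κ.col + 1) * κ.side - κ.col * κ.side) :=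
          Finset.sum_congr rfl fun _ _ => by ring
      _ ≤ 3 * radius p a j := by linarith
  · intro κ hκ
    obtain ⟨-, ht, hlt⟩ := hs κ hκ
    exact Set.Ioc_subset_Ioc (by linarith [ht.lt_col_succ_mul]) (by linarith [ht.col_mul_le])
  · intro κ hκ κ' hκ' hne
    obtain ⟨hl, ht, -⟩ := hs κ hκ
    obtain ⟨hl', ht', -⟩ := hs κ' hκ'
    have hφ := ht.phase_eq.trans ht'.phase_eq.symm
    have hside := Cell.side_eq_side hφ (hl.trans hl'.symm)
    refine Set.disjoint_left.2 fun u hu hu' => hne (Cell.ext hφ (hl.trans hl'.symm) ?_ ?_)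
    · refine eq_of_modEq_of_mul_lt (c := 1) κ.side_pos.le (Nat.modEq_one) ?_ ?_ <;> push_cast
      · exact hu.1.trans_le (hside ▸ hu'.2)
      · exact (hside ▸ hu'.1).trans_le hu.2
    · refine eq_of_modEq_of_mul_lt (c := 1) κ.side_pos.le (Nat.modEq_one) ?_ ?_ <;> push_cast
      · exact ht.row_mul_le.trans_lt (hside ▸ ht'.lt_row_succ_mul)
      · exact (hside ▸ ht'.row_mul_le).trans_lt ht.lt_row_succ_mul

lemma sideLength_antitone (φ : ℕ × ℤ) : Antitone (sideLength φ) := by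
  refine antitone_nat_of_succ_le fun k => ?_
  rw [← branching_mul_sideLength_succ φ k]
  exact le_mul_of_one_le_left (sideLength_pos _ _).le (one_le_two.trans (two_le_branching _))

lemma Touches.isBig (h : Touches p a j κ) (hlt : κ.side < radius p a j) : IsBig p a j := by
  refine lt_of_le_of_lt ?_ hlt
  have hl := h.level_le
  rw [h.phase_eq] at hl
  rw [Cell.side, h.phase_eq]
  exact sideLength_antitone _ hl

lemma IsRun.sum_side_le_of_side_lt_radius (h : IsRun p a) (hS : Serves S p) {e k : ℕ}
    (hs : ∀ κ ∈ s, κ.phase.1 = e ∧ κ.level = k)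
    (ht : ∀ κ ∈ s, ∃ j < n, Touches p a j κ ∧ κ.side < radius p a j) :
    ∑ κ ∈ s, κ.side ≤ 15 * μH[1].real S := by
  classical
  choose! rep hrep using ht
  rw [← Finset.sum_fiberwise_of_maps_to (g := rep)
    (t := {j ∈ Finset.range n | epoch j = e ∧ IsBig p a j})]
  · calc _ ≤ ∑ j ∈ Finset.range n with epoch j = e ∧ IsBig p a j, 3 * radius p a j := by
          refine Finset.sum_le_sum fun j _ =>
            h.sum_side_le_three_mul_radius (k := k) fun κ hκj => ?_
          obtain ⟨hκ, rfl⟩ := Finset.mem_filter.1 hκj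
          exact ⟨(hs κ hκ).2, (hrep κ hκ).2⟩
      _ ≤ 15 * μH[1].real S := by
          rw [← Finset.mul_sum]
          linarith [h.sum_radius_isBig_le hS n e]
  · intro κ hκ
    obtain ⟨hlt, ht, hr⟩ := hrep κ hκ
    have he : epoch (rep κ) = e := (congrArg Prod.fst ht.phase_eq).symm.trans (hs κ hκ).1
    exact Finset.mem_filter.2 ⟨Finset.mem_range.2 hlt, he, ht.isBig hr⟩

lemma Touches.disjoint_box (hi : Touches p a i κ) (hj : Touches p a j κ')
    (hri : radius p a i ≤ κ.side) (hrj : radius p a j ≤ κ'.side)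
    (hφ : κ.phase = κ'.phase) (hl : κ.level = κ'.level) (hcol : κ.col ≡ κ'.col [MOD 3])
    (hrow : κ.row ≡ κ'.row [MOD 2]) (hne : κ ≠ κ') :
    Disjoint (box (p i) κ.side) (box (p j) κ'.side) := by
  obtain ⟨-, -, -, hirow, hirow', hicol, hicol'⟩ := hi
  obtain ⟨-, -, -, hjrow, hjrow', hjcol, hjcol'⟩ := hj
  rw [← Cell.side_eq_side hφ hl] at *
  refine Set.disjoint_left.2 ?_
  rintro ⟨u, y⟩ ⟨hui, hyi⟩ ⟨huj, hyj⟩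
  refine hne (Cell.ext hφ hl (eq_of_modEq_of_mul_lt κ.side_pos.le hcol ?_ ?_)
    (eq_of_modEq_of_mul_lt κ.side_pos.le hrow ?_ ?_)) <;> push_cast
  · linarith [hui.1, huj.2, hicol, hjcol']
  · linarith [huj.1, hui.2, hjcol, hicol']
  · linarith [hyi.1, hyj.2, hirow, hjrow']
  · linarith [hyj.1, hyi.2, hjrow, hirow']

-- Among the cells of one level whose columns agree mod 3 and whose rows agree mod 2, the boxes at
-- their touchers are disjoint.
lemma IsRun.sum_side_le_of_radius_le_side (h : IsRun p a) (hS : Serves S p) {e k : ℕ}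
    (hs : ∀ κ ∈ s, κ.phase.1 = e ∧ κ.level = k)
    (ht : ∀ κ ∈ s, ∃ j, Touches p a j κ ∧ radius p a j ≤ κ.side) :
    ∑ κ ∈ s, κ.side ≤ 30 * μH[1].real S := by
  classical
  choose! rep hrep using ht
  rw [← Finset.sum_fiberwise_of_maps_to (t := Finset.range 3 ×ˢ Finset.range 2)
    (g := fun κ : Cell => (κ.col % 3, κ.row % 2)) fun κ _ => Finset.mem_product.2
      ⟨Finset.mem_range.2 (Nat.mod_lt _ three_pos), Finset.mem_range.2 (Nat.mod_lt _ two_pos)⟩]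
  calc _ ≤ ∑ _ ∈ Finset.range 3 ×ˢ Finset.range 2, 5 * μH[1].real S := by
        refine Finset.sum_le_sum fun c _ => ?_
        refine sum_le_of_disjoint_box_of_width_eq (idx := rep) h.monotone_snd hS (fun κ hκ => ?_) ?_
        · exact ⟨κ.side_pos, (hrep κ (Finset.mem_filter.1 hκ).1).1.side_le_fst⟩
        · intro κ hκc κ' hκc' hne hw
          obtain ⟨hκ, hc⟩ := Finset.mem_filter.1 hκc
          obtain ⟨hκ', hc'⟩ := Finset.mem_filter.1 hκc'
          obtain ⟨ht, hr⟩ := hrep κ hκ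
          obtain ⟨ht', hr'⟩ := hrep κ' hκ'
          obtain ⟨hcol, hrow⟩ := Prod.ext_iff.1 (hc.trans hc'.symm)
          have hwidth : κ.phase.2 = κ'.phase.2 := by rw [ht.phase_eq, ht'.phase_eq]; exact hw
          exact ht.disjoint_box ht' hr hr'
            (Prod.ext ((hs κ hκ).1.trans (hs κ' hκ').1.symm) hwidth)
            ((hs κ hκ).2.trans (hs κ' hκ').2.symm) hcol hrow hne
    _ = 30 * μH[1].real S := by
        rw [Finset.sum_const, Finset.card_product, Finset.card_range, Finset.card_range,
          nsmul_eq_mul]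
        push_cast
        ring

lemma IsRun.sum_side_level_le (h : IsRun p a) (hS : Serves S p) (n e k : ℕ) :
    ∑ κ ∈ touchedCells p a n with κ.phase.1 = e ∧ κ.level = k, κ.side ≤ 45 * μH[1].real S := by
  classical
  have hwide := h.sum_side_le_of_side_lt_radius (n := n) (e := e) (k := k) hS
    (s := {κ ∈ {κ ∈ touchedCells p a n | κ.phase.1 = e ∧ κ.level = k} |
      ∃ j < n, Touches p a j κ ∧ κ.side < radius p a j})
    (fun κ hκ => (Finset.mem_filter.1 (Finset.mem_filter.1 hκ).1).2)
    fun κ hκ => (Finset.mem_filter.1 hκ).2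
  have hnarrow := h.sum_side_le_of_radius_le_side (e := e) (k := k) hS
    (s := {κ ∈ {κ ∈ touchedCells p a n | κ.phase.1 = e ∧ κ.level = k} |
      ¬ ∃ j < n, Touches p a j κ ∧ κ.side < radius p a j})
    (fun κ hκ => (Finset.mem_filter.1 (Finset.mem_filter.1 hκ).1).2) fun κ hκ => by
      obtain ⟨hκ, hnot⟩ := Finset.mem_filter.1 hκ
      obtain ⟨j, hj, ht⟩ := mem_touchedCells.1 (Finset.mem_filter.1 hκ).1
      exact ⟨j, ht, not_lt.1 fun hlt => hnot ⟨j, hj, ht, hlt⟩⟩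
  rw [← Finset.sum_filter_add_sum_filter_not _
    fun κ => ∃ j < n, Touches p a j κ ∧ κ.side < radius p a j]
  linarith

lemma epoch_lt_of_lt (hj : j < n) : epoch j < epoch (n - 1) + 1 :=
  Nat.lt_succ_of_le (epoch_mono (Nat.le_sub_one_of_lt hj))

lemma IsRun.sum_side_le (h : IsRun p a) (hS : Serves S p) (n : ℕ) :
    ∑ κ ∈ touchedCells p a n, κ.side ≤
      ∑ e ∈ Finset.range (epoch (n - 1) + 1), 45 * (depth e + 1) * μH[1].real S := by
  rw [← Finset.sum_fiberwise_of_maps_to (g := fun κ : Cell => κ.phase.1)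
    (t := Finset.range (epoch (n - 1) + 1))]
  · refine Finset.sum_le_sum fun e _ => ?_
    rw [← Finset.sum_fiberwise_of_maps_to (g := Cell.level) (t := Finset.range (depth e + 1))]
    · calc _ ≤ ∑ k ∈ Finset.range (depth e + 1), 45 * μH[1].real S := by
            refine Finset.sum_le_sum fun k _ => ?_
            rw [Finset.filter_filter]
            exact h.sum_side_level_le hS n e k
        _ = 45 * (depth e + 1) * μH[1].real S := by
            rw [Finset.sum_const, Finset.card_range, nsmul_eq_mul]
            push_cast
            ring
    · intro κ hκe
      obtain ⟨hκ, rfl⟩ := Finset.mem_filter.1 hκe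
      obtain ⟨j, -, ht⟩ := mem_touchedCells.1 hκ
      exact Finset.mem_range.2 (Nat.lt_succ_of_le ht.level_le)
  · intro κ hκ
    obtain ⟨j, hj, ht⟩ := mem_touchedCells.1 hκ
    rw [ht.phase_eq]
    exact Finset.mem_range.2 (epoch_lt_of_lt hj)

end Vertical

/-! ### The total cost -/

section Cost

variable {S : Set Pt} {p : ℕ → Pt} {a : ℕ → ℝ} {i n : ℕ}

lemma hausdorffMeasure_segment_mk_left {c u v : ℝ} (h : u ≤ v) :
    μH[1] (segment ℝ ((c, u) : Pt) (c, v)) = ENNReal.ofReal (v - u) := by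
  rw [hausdorffMeasure_segment, edist_comm, edist_dist, dist_prod_same_left, Real.dist_eq,
    abs_of_nonneg (sub_nonneg.2 h)]

lemma hausdorffMeasure_segment_mk_right {c u v : ℝ} (h : u ≤ v) :
    μH[1] (segment ℝ ((u, c) : Pt) (v, c)) = ENNReal.ofReal (v - u) := by
  rw [hausdorffMeasure_segment, edist_comm, edist_dist, dist_prod_same_right, Real.dist_eq,
    abs_of_nonneg (sub_nonneg.2 h)]

lemma mem_touchedCells_of_mem_live {κ : Cell} (hi : i < n) (hκ : κ ∈ live p a i) :
    κ ∈ touchedCells p a n := by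
  obtain ⟨-, -, j, hj, ht⟩ := hκ
  exact mem_touchedCells.2 ⟨j, hj.trans hi, ht⟩

open Classical in
lemma IsRun.hausdorffMeasure_stroke_le (h : IsRun p a) (hi : i < n) :
    μH[1] (stroke p a i) ≤ ENNReal.ofReal (((p i).1 - a i) + ((height p (i + 1) - height p i) +
      ∑ κ ∈ touchedCells p a n with κ ∈ live p a i, (height p (i + 1) - height p i))) := by
  have hΔ : 0 ≤ height p (i + 1) - height p i := sub_nonneg.2 (h.height_le_succ i)
  have hline (c : ℝ) : μH[1] (segment ℝ ((c, height p i) : Pt) (c, height p (i + 1))) =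
      ENNReal.ofReal (height p (i + 1) - height p i) :=
    hausdorffMeasure_segment_mk_left (h.height_le_succ i)
  have hsum := Finset.sum_nonneg fun κ (_ : κ ∈ {κ ∈ touchedCells p a n | κ ∈ live p a i}) => hΔ
  rw [ENNReal.ofReal_add (sub_nonneg.2 (h.anchor_le i)) (add_nonneg hΔ hsum),
    ENNReal.ofReal_add hΔ hsum, ENNReal.ofReal_sum_of_nonneg fun _ _ => hΔ, stroke, lines,
    Set.biUnion_insert, Set.biUnion_image]
  refine (measure_union_le _ _).trans (add_le_add ?_ ((measure_union_le _ _).trans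
    (add_le_add (hline 0).le ?_)))
  · exact (hausdorffMeasure_segment_mk_right (h.anchor_le i)).le
  · have hlive (κ : Cell) : κ ∈ live p a i ↔
        κ ∈ ({κ ∈ touchedCells p a n | κ ∈ live p a i} : Finset Cell) := by
      simpa only [Finset.mem_filter, iff_and_self] using mem_touchedCells_of_mem_live hi
    rw [Set.iUnion_congr fun κ => Set.iUnion_congr_Prop (hlive κ) fun _ => rfl]
    exact (measure_biUnion_finset_le _ _).trans (Finset.sum_le_sum fun _ _ => (hline _).le)

lemma Serves.sum_height_sub_le (hS : Serves S p) (n : ℕ) :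
    ∑ i ∈ Finset.range n, (height p (i + 1) - height p i) ≤ μH[1].real S := by
  rw [Finset.sum_range_sub]
  cases n with
  | zero => simp
  | succ n => exact (sub_zero _).trans_le (hS.snd_le n)

lemma IsRun.sum_sub_anchor_range_le (h : IsRun p a) (hS : Serves S p) (n : ℕ) :
    ∑ i ∈ Finset.range n, ((p i).1 - a i) ≤
      ∑ e ∈ Finset.range (epoch (n - 1) + 1), 14 * branching e * μH[1].real S := by
  rw [← Finset.sum_fiberwise_of_maps_to (g := epoch) fun i hi =>
    Finset.mem_range.2 (epoch_lt_of_lt (Finset.mem_range.1 hi))]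
  exact Finset.sum_le_sum fun e _ => h.sum_sub_anchor_le hS n e

open Classical in
lemma IsRun.sum_sum_height_sub_le (h : IsRun p a) (n : ℕ) :
    ∑ i ∈ Finset.range n, ∑ κ ∈ touchedCells p a n with κ ∈ live p a i,
        (height p (i + 1) - height p i) ≤
      2 * ∑ κ ∈ touchedCells p a n, κ.side := by
  rw [Finset.mul_sum, Finset.sum_comm' (t' := touchedCells p a n)
    (s' := fun κ => {i ∈ Finset.range n | κ ∈ live p a i})
    (by simp only [Finset.mem_filter]; tauto)]
  exact Finset.sum_le_sum fun κ _ => h.sum_height_sub_live_le n κ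

lemma IsRun.hausdorffMeasure_drawing_le (h : IsRun p a) (hS : Serves S p) (n : ℕ) :
    μH[1] (drawing p a n) ≤ ENNReal.ofReal ((1 + 90 *
      ∑ e ∈ Finset.range (epoch (n - 1) + 1), ((branching e : ℝ) + (depth e + 1))) *
        μH[1].real S) := by
  classical
  refine (measure_biUnion_finset_le _ _).trans ((Finset.sum_le_sum fun i hi =>
    h.hausdorffMeasure_stroke_le (Finset.mem_range.1 hi)).trans ?_)
  rw [← ENNReal.ofReal_sum_of_nonneg]
  · refine ENNReal.ofReal_le_ofReal ?_
    have hvert := (h.sum_sum_height_sub_le n).trans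
      (mul_le_mul_of_nonneg_left (h.sum_side_le hS n) zero_le_two)
    rw [Finset.sum_add_distrib, Finset.sum_add_distrib]
    calc _ ≤ _ := add_le_add (h.sum_sub_anchor_range_le hS n)
          (add_le_add (hS.sum_height_sub_le n) hvert)
      _ = μH[1].real S + ∑ e ∈ Finset.range (epoch (n - 1) + 1),
          (14 * branching e + 90 * (depth e + 1)) * μH[1].real S := by
          rw [Finset.mul_sum, add_left_comm, ← Finset.sum_add_distrib]
          exact congrArg _ (Finset.sum_congr rfl fun _ _ => by ring)
      _ ≤ μH[1].real S + ∑ e ∈ Finset.range (epoch (n - 1) + 1),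
          (90 * branching e + 90 * (depth e + 1)) * μH[1].real S := by
          gcongr
          norm_num
      _ = _ := by
          simp only [← mul_add, ← Finset.sum_mul, ← Finset.mul_sum]
          ring
  · intro i _
    have hΔ : 0 ≤ height p (i + 1) - height p i := sub_nonneg.2 (h.height_le_succ i)
    have := h.anchor_le i
    exact add_nonneg (sub_nonneg.2 this) (add_nonneg hΔ (Finset.sum_nonneg fun _ _ => hΔ))

end Cost

/-! ### The competitive ratio -/

lemma branching_le (e : ℕ) : (branching e : ℝ) ≤ 4 * (2 ^ e / (e + 1)) := by
  have hsucc : e + 1 ≤ 2 * (e / 2 + 1) := by lia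
  have hhalf : e / 2 + 1 ≤ 2 ^ (e / 2) := Nat.lt_two_pow_self
  have hsq : 2 ^ (e / 2) * 2 ^ (e / 2) ≤ 2 ^ e := by
    rw [← pow_add]
    exact pow_le_pow_right₀ one_le_two (by lia)
  have h : branching e * (e + 1) ≤ 4 * 2 ^ e :=
    calc branching e * (e + 1) ≤ 2 ^ (e / 2 + 1) * (2 * 2 ^ (e / 2)) := by
          rw [branching]; gcongr; lia
      _ = 4 * (2 ^ (e / 2) * 2 ^ (e / 2)) := by ring
      _ ≤ 4 * 2 ^ e := by gcongr
  rw [mul_div_assoc', le_div_iff₀ (by positivity)]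
  exact_mod_cast h

lemma depth_add_one_le (e : ℕ) : (depth e + 1 : ℝ) ≤ 4 * (2 ^ e / (e + 1)) := by
  have hsucc : (e + 1 : ℝ) ≤ 2 * ((e / 2 + 1 : ℕ) : ℝ) := by
    exact_mod_cast (by lia : e + 1 ≤ 2 * (e / 2 + 1))
  have hquot : ((2 ^ e / (e / 2 + 1) : ℕ) : ℝ) ≤ 2 * (2 ^ e / (e + 1)) :=
    calc ((2 ^ e / (e / 2 + 1) : ℕ) : ℝ) ≤ 2 ^ e / ((e / 2 + 1 : ℕ) : ℝ) := by
          exact_mod_cast Nat.cast_div_le (α := ℝ) (m := 2 ^ e) (n := e / 2 + 1)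
      _ ≤ 2 * (2 ^ e / (e + 1)) := by
          rw [mul_div_assoc', div_le_div_iff₀ (by positivity) (by positivity), mul_comm 2,
            mul_assoc]
          gcongr
  have hone : (1 : ℝ) ≤ 2 ^ e / (e + 1) := by
    rw [one_le_div (by positivity)]
    exact_mod_cast Nat.lt_two_pow_self (n := e)
  rw [depth, Nat.cast_add, Nat.cast_one]
  linarith

lemma sum_two_pow_div_le (n : ℕ) :
    ∑ e ∈ Finset.range (n + 1), (2 ^ e / (e + 1) : ℝ) ≤ 4 * (2 ^ n / (n + 1)) := by
  induction n with
  | zero => norm_num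
  | succ n ih =>
    rw [Finset.sum_range_succ]
    rcases n.eq_zero_or_pos with rfl | hn
    · norm_num [Finset.sum_range_succ]
    have hn : (1 : ℝ) ≤ n := by exact_mod_cast hn
    have hratio : 4 * (2 ^ n / (n + 1) : ℝ) ≤ 3 * (2 ^ (n + 1) / ((n + 1 : ℕ) + 1)) := by
      rw [mul_div_assoc', mul_div_assoc', div_le_div_iff₀ (by positivity) (by positivity)]
      push_cast
      rw [pow_succ]
      nlinarith [pow_pos (two_pos (α := ℝ)) n]
    linarith

lemma two_pow_div_le_of_lt_of_le {N m : ℕ} (hm : 1 ≤ m) (hlt : 2 ^ 2 ^ m < N)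
    (hle : N ≤ 2 ^ 2 ^ (m + 1)) :
    (2 ^ (m + 1) / ((m + 1 : ℕ) + 1) : ℝ) ≤ 4 * (Real.log N / Real.log (Real.log N)) := by
  have hlog := Real.log_two_gt_d9
  have hlog' := Real.log_two_lt_d9
  have hN : (0 : ℝ) < N := by exact_mod_cast (Nat.zero_le _).trans_lt hlt
  have hlower : 2 ^ m * Real.log 2 ≤ Real.log N := by
    simpa using Real.log_le_log (by positivity)
      (show ((2 ^ 2 ^ m : ℕ) : ℝ) ≤ N by exact_mod_cast hlt.le)
  have hupper : Real.log N ≤ 2 ^ (m + 1) * Real.log 2 := by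
    simpa using Real.log_le_log hN (show (N : ℝ) ≤ (2 ^ 2 ^ (m + 1) : ℕ) by exact_mod_cast hle)
  have htwo : (2 : ℝ) ≤ 2 ^ m := le_self_pow₀ one_le_two (by lia)
  have hone : 1 < Real.log N := by nlinarith
  have hloglog : Real.log (Real.log N) ≤ (m + 1 : ℕ) + 1 :=
    calc Real.log (Real.log N) ≤ Real.log (2 ^ (m + 1)) :=
          Real.log_le_log (by linarith) (hupper.trans (mul_le_of_le_one_right (by positivity)
            (by linarith)))
      _ = (m + 1 : ℕ) * Real.log 2 := Real.log_pow _ _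
      _ ≤ (m + 1 : ℕ) + 1 := by nlinarith [Nat.cast_nonneg (α := ℝ) (m + 1)]
  rw [mul_div_assoc']
  refine div_le_div₀ (by linarith) ?_ (Real.log_pos hone) hloglog
  rw [pow_succ]
  nlinarith

lemma two_pow_epoch_div_le (N : ℕ) : (2 ^ epoch (N - 1) / (epoch (N - 1) + 1) : ℝ) ≤
    4 * max 1 (Real.log N / Real.log (Real.log N)) := by
  rcases lt_or_ge (epoch (N - 1)) 2 with h | h
  · have hsmall : (2 ^ epoch (N - 1) / (epoch (N - 1) + 1) : ℝ) ≤ 2 := by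
      interval_cases epoch (N - 1) <;> norm_num
    linarith [le_max_left 1 (Real.log N / Real.log (Real.log N))]
  · obtain ⟨m, hm⟩ : ∃ m, epoch (N - 1) = m + 1 := Nat.exists_eq_add_of_le' (by lia)
    have hlower : ¬ N - 1 < 2 ^ 2 ^ m := fun hlt => by
      have := epoch_le_iff.2 hlt
      lia
    have hupper : N - 1 < 2 ^ 2 ^ (m + 1) := epoch_le_iff.1 hm.le
    have hpos : 0 < 2 ^ 2 ^ m := by positivity
    rw [hm]
    exact (two_pow_div_le_of_lt_of_le (by lia) (by lia) (by lia)).trans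
      (mul_le_mul_of_nonneg_left (le_max_right _ _) zero_le_four)

lemma one_add_sum_branching_add_depth_le (N : ℕ) :
    1 + 90 * ∑ e ∈ Finset.range (epoch (N - 1) + 1), ((branching e : ℝ) + (depth e + 1)) ≤
      11521 * max 1 (Real.log N / Real.log (Real.log N)) := by
  have hsum : ∑ e ∈ Finset.range (epoch (N - 1) + 1), ((branching e : ℝ) + (depth e + 1)) ≤
      8 * ∑ e ∈ Finset.range (epoch (N - 1) + 1), (2 ^ e / (e + 1) : ℝ) := by
    rw [Finset.mul_sum]
    exact Finset.sum_le_sum fun e _ => by linarith [branching_le e, depth_add_one_le e]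
  linarith [sum_two_pow_div_le (epoch (N - 1)), two_pow_epoch_div_le N,
    le_max_left 1 (Real.log N / Real.log (Real.log N))]

lemma serves_requests {Q : List Pt} {S : Set Pt} (hQ : Q ≠ []) (hS : FeasibleRSA Q S)
    (hne_top : μH[1] S ≠ ∞) : Serves S (requests Q) :=
  ⟨hne_top, fun i => hS.2 _ (requests_mem hQ i)⟩

lemma rsaCost_gridAlgorithm_le {Q : List Pt} {S : Set Pt} (hQ : ValidRSA Q)
    (hS : FeasibleRSA Q S) :
    rsaCost (gridAlgorithm Q) ≤
      ENNReal.ofReal (11521 * max 1 (Real.log Q.length / Real.log (Real.log Q.length))) *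
        rsaCost S := by
  have hpos : 0 < 11521 * max 1 (Real.log Q.length / Real.log (Real.log Q.length)) := by positivity
  rcases eq_or_ne Q [] with rfl | hne
  · simp [gridAlgorithm, drawing, rsaCost]
  rcases eq_or_ne (rsaCost S) ∞ with htop | htop
  · simp [htop]
  · calc rsaCost (gridAlgorithm Q) ≤ _ :=
          (isRun_requests hQ).hausdorffMeasure_drawing_le (serves_requests hne hS htop) Q.length
      _ ≤ ENNReal.ofReal (11521 * max 1 (Real.log Q.length / Real.log (Real.log Q.length)) *
            μH[1].real S) := by
          gcongr
          exact one_add_sum_branching_add_depth_le _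
      _ = _ := by rw [ENNReal.ofReal_mul hpos.le, ofReal_measureReal htop, rsaCost]

end RSA

/-- There is a constant `c > 0` and a deterministic online RSA algorithm whose
cost on every valid input `Q` of `N` points is at most
`c · max(1, log N / log log N) · opt(Q)`. -/
theorem rsa_online_upper_bound :
    ∃ c : ℝ, 0 < c ∧ ∃ A : List Pt → Set Pt, OnlineRSA A ∧
      ∀ Q : List Pt, ValidRSA Q →
        rsaCost (A Q) ≤
          ENNReal.ofReal
              (c * max 1 (Real.log Q.length / Real.log (Real.log Q.length))) *
            optRSA Q := by
  refine ⟨11521, by norm_num, RSA.gridAlgorithm, RSA.onlineRSA_gridAlgorithm, fun Q hQ => ?_⟩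
  have hc : ENNReal.ofReal
      (11521 * max 1 (Real.log Q.length / Real.log (Real.log Q.length))) ≠ 0 :=
    (ENNReal.ofReal_pos.2 (by positivity)).ne'
  simp only [optRSA, sInf_eq_iInf, ENNReal.mul_iInf_of_ne hc ENNReal.ofReal_ne_top]
  refine le_iInf₂ ?_
  rintro _ ⟨S, hS, rfl⟩
  exact RSA.rsaCost_gridAlgorithm_le hQ hS
end
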